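/- Let 𝓕 be a family of graphs each of chromatic number 2 (bipartite) that contains no forest, and fix ε > 0, β ≥ 1, α ≥ 32β. There exist a constant c > 0 and d₀ such that for all d ≥ d₀ the following holds: if G is a d-regular graph and 𝒢 is a graph on α·d vertices with Δ(𝒢) ≤ β·δ(𝒢), δ(𝒢) > d^ε, and hom*(F, 𝒢) = 0 for every F ∈ 𝓕, then there exists a spanning 𝓕-free subgraph H ⊆ G with minimum degree δ(H) ≥ c·δ(𝒢) (indeed δ(H) ≥ δ(𝒢)/(4α)). -/

import Mathlib

open SimpleGraph

def ContainsCopy {α β : Type*} (F : SimpleGraph α) (H : SimpleGraph β) : Prop :=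
  ∃ f : F →g H, Function.Injective f

abbrev GraphFamily := Set (Σ n : ℕ, SimpleGraph (Fin n))

def FamFree {β : Type*} (H : SimpleGraph β) (𝓕 : GraphFamily) : Prop :=
  ∀ F ∈ 𝓕, ¬ ContainsCopy F.2 H

noncomputable def extremalNum (n : ℕ) (𝓕 : GraphFamily) : ℕ :=
  sSup {k | ∃ H : SimpleGraph (Fin n), FamFree H 𝓕 ∧ k = H.edgeSet.ncard}

def LocallyInjective {α β : Type*} {F : SimpleGraph α} {G : SimpleGraph β}
    (φ : F →g G) : Prop :=
  ∀ v : α, Set.InjOn φ (F.neighborSet v)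

def NoLocInjHom {α β : Type*} (F : SimpleGraph α) (G : SimpleGraph β) : Prop :=
  ¬ ∃ φ : F →g G, LocallyInjective φ

def ClosedFamily (𝓕 : GraphFamily) : Prop :=
  ∀ (W : Type) [Fintype W] (G : SimpleGraph W),
    (∀ F ∈ 𝓕, NoLocInjHom F.2 G) ↔ FamFree G 𝓕

noncomputable def deg {β : Type*} (H : SimpleGraph β) (v : β) : ℕ :=
  (H.neighborSet v).ncard

noncomputable def minDeg {β : Type*} [Fintype β] (H : SimpleGraph β) : ℕ :=
  ⨅ v, deg H v

noncomputable def maxDeg {β : Type*} [Fintype β] (H : SimpleGraph β) : ℕ :=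
  ⨆ v, deg H v

def RegularDeg {β : Type*} (G : SimpleGraph β) (d : ℕ) : Prop :=
  ∀ v, deg G v = d

noncomputable def Bad {α γ : Type*} (G : SimpleGraph α) (χ : α → γ) (v : α) : ℕ :=
  {u | u ∈ G.neighborSet v ∧ ∃ v', v' ∈ G.neighborSet u ∧ v' ≠ v ∧ χ v' = χ v}.ncard

/-!
Call the vertices of `𝒢` colours. If every kept edge `uv` of `G` is coloured by an edge of `𝒢`, and
each of `u`, `v` is the only neighbour of the other one with its colour, then the colouring is a
locally injective homomorphism from the kept graph `H` to `𝒢`. A copy of `F` in `H` would therefore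
give a locally injective homomorphism from `F` to `𝒢`. So it suffices to find a colouring that keeps
enough edges at every vertex.

Pass to a bipartite subgraph `B` of `G` with at least half of the degree everywhere, and split the
colours into a palette `P`, about three quarters of them and of every neighbourhood in `𝒢`, and a
reserve. A neighbour `u` of `v` is bad if `v` shares its colour with another neighbour of `u`. Since
the reserve has at least `4 * d` colours, a colouring of least total conflict uses only reserve
colours and makes at most a quarter of the neighbours of each vertex bad. Now colour the vertices
uniformly from `P`, and give its reserve colour to every vertex with too many bad neighbours.

Fix `v` and reveal the colours outside its neighbourhood `N`. As `B` is triangle-free, this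
determines the final colour of `v` and leaves at least three quarters of `N` not bad. The colours
on `N` are still uniform: about a `δ / α d` fraction of them are adjacent to the colour of `v`, few
of those are repeated in `N`, and few of them force a vertex of `N` to be recoloured, all with
exponentially small failure probability. The failure at `v` depends only on the colours within
distance `4`, so the Lovász local lemma removes all failures at once.
-/

section Chernoff

open MeasureTheory ProbabilityTheory Real

variable {Ω ι : Type*} {mΩ : MeasurableSpace Ω} {μ : Measure Ω}

theorem exp_mul_le_one_add_mul (t : ℝ) {x : ℝ} (hx : x ∈ Set.Icc (0 : ℝ) 1) :
    exp (t * x) ≤ 1 + (exp t - 1) * x := by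
  have h := convexOn_exp.2 (Set.mem_univ 0) (Set.mem_univ t) (sub_nonneg.2 hx.2) hx.1
    (sub_add_cancel 1 x)
  simp only [smul_eq_mul, mul_zero, zero_add, exp_zero, mul_one] at h
  linarith [mul_comm t x ▸ h]

theorem mgf_le_exp_mul_integral [IsProbabilityMeasure μ] {X : Ω → ℝ} (hX : AEMeasurable X μ)
    (h01 : ∀ ω, X ω ∈ Set.Icc (0 : ℝ) 1) (t : ℝ) :
    mgf X μ t ≤ exp ((exp t - 1) * μ[X]) := by
  have hint : Integrable X μ := Integrable.of_mem_Icc 0 1 hX (ae_of_all _ h01)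
  calc mgf X μ t
      ≤ ∫ ω, (1 + (exp t - 1) * X ω) ∂μ :=
        integral_mono_of_nonneg (ae_of_all _ fun ω => (exp_pos _).le)
          ((integrable_const 1).add (hint.const_mul _))
          (ae_of_all _ fun ω => exp_mul_le_one_add_mul t (h01 ω))
    _ = (exp t - 1) * μ[X] + 1 := by
        rw [integral_add (integrable_const 1) (hint.const_mul _), integral_const_mul]
        simp [add_comm]
    _ ≤ exp ((exp t - 1) * μ[X]) := add_one_le_exp _

theorem measureReal_ge_le_exp_of_mgf_le [IsFiniteMeasure μ] {Z : Ω → ℝ} {m η : ℝ} (hm : 0 ≤ m)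
    (hη0 : 0 ≤ η) (hη1 : η ≤ 1) (hint : Integrable (fun ω => exp (log (1 + η / 2) * Z ω)) μ)
    (hmgf : mgf Z μ (log (1 + η / 2)) ≤ exp (η / 2 * m)) :
    μ.real {ω | (1 + η) * m ≤ Z ω} ≤ exp (-(η ^ 2 / 6 * m)) := by
  have hlog : η / 2 + η ^ 2 / 6 ≤ log (1 + η / 2) * (1 + η) := by
    have h := one_sub_inv_le_log_of_pos (show 0 < 1 + η / 2 by linarith)
    refine le_trans ?_ (mul_le_mul_of_nonneg_right h (by linarith))
    rw [← sub_nonneg]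
    have : (1 - (1 + η / 2)⁻¹) * (1 + η) - (η / 2 + η ^ 2 / 6) =
        η ^ 2 * (1 - η) / (6 * (2 + η)) := by
      field_simp
      ring
    rw [this]
    have := sub_nonneg.2 hη1
    positivity
  calc μ.real {ω | (1 + η) * m ≤ Z ω}
      ≤ exp (-log (1 + η / 2) * ((1 + η) * m)) * mgf Z μ (log (1 + η / 2)) :=
        measure_ge_le_exp_mul_mgf _ (log_nonneg (by linarith)) hint
    _ ≤ exp (-log (1 + η / 2) * ((1 + η) * m)) * exp (η / 2 * m) := by gcongr
    _ ≤ exp (-(η ^ 2 / 6 * m)) := by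
        rw [← exp_add, exp_le_exp]
        nlinarith [mul_le_mul_of_nonneg_right hlog hm]

theorem measureReal_le_le_exp_of_mgf_le [IsFiniteMeasure μ] {Z : Ω → ℝ} {m η : ℝ} (hm : 0 ≤ m)
    (hη0 : 0 ≤ η) (hη1 : η ≤ 1) (hint : Integrable (fun ω => exp (log (1 - η / 2) * Z ω)) μ)
    (hmgf : mgf Z μ (log (1 - η / 2)) ≤ exp (-(η / 2 * m))) :
    μ.real {ω | Z ω ≤ (1 - η) * m} ≤ exp (-(η ^ 2 / 6 * m)) := by
  have hlog : -log (1 - η / 2) * (1 - η) ≤ η / 2 - η ^ 2 / 6 := by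
    have h := one_sub_inv_le_log_of_pos (show 0 < 1 - η / 2 by linarith)
    refine le_trans (mul_le_mul_of_nonneg_right (neg_le_neg h) (by linarith)) ?_
    have h2 : 0 < 2 - η := by linarith
    have hne : 1 - η / 2 ≠ 0 := by linarith
    rw [← sub_nonneg]
    have : (η / 2 - η ^ 2 / 6) - -(1 - (1 - η / 2)⁻¹) * (1 - η) =
        η ^ 2 * (1 + η) / (6 * (2 - η)) := by
      field_simp [hne]
      ring
    rw [this]
    positivity
  calc μ.real {ω | Z ω ≤ (1 - η) * m}
      ≤ exp (-log (1 - η / 2) * ((1 - η) * m)) * mgf Z μ (log (1 - η / 2)) :=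
        measure_le_le_exp_mul_mgf _ (log_nonpos (by linarith) (by linarith)) hint
    _ ≤ exp (-log (1 - η / 2) * ((1 - η) * m)) * exp (-(η / 2 * m)) := by gcongr
    _ ≤ exp (-(η ^ 2 / 6 * m)) := by
        rw [← exp_add, exp_le_exp]
        nlinarith [mul_le_mul_of_nonneg_right hlog hm]

variable [IsProbabilityMeasure μ] {X : ι → Ω → ℝ}

theorem mgf_sum_le_exp_mul_sum_integral (hind : iIndepFun X μ) (hX : ∀ i, Measurable (X i))
    (h01 : ∀ i ω, X i ω ∈ Set.Icc (0 : ℝ) 1) (s : Finset ι) (t : ℝ) :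
    mgf (∑ i ∈ s, X i) μ t ≤ exp ((exp t - 1) * ∑ i ∈ s, μ[X i]) := by
  rw [hind.mgf_sum hX, Finset.mul_sum, exp_sum]
  exact Finset.prod_le_prod (fun _ _ => mgf_nonneg)
    fun i _ => mgf_le_exp_mul_integral (hX i).aemeasurable (h01 i) t

theorem measureReal_sum_ge_le_exp (hind : iIndepFun X μ) (hX : ∀ i, Measurable (X i))
    (h01 : ∀ i ω, X i ω ∈ Set.Icc (0 : ℝ) 1) (s : Finset ι) {m η : ℝ}
    (hm : ∑ i ∈ s, μ[X i] ≤ m) (hη0 : 0 ≤ η) (hη1 : η ≤ 1) :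
    μ.real {ω | (1 + η) * m ≤ ∑ i ∈ s, X i ω} ≤ exp (-(η ^ 2 / 6 * m)) := by
  have hsum : 0 ≤ ∑ i ∈ s, μ[X i] :=
    Finset.sum_nonneg fun i _ => integral_nonneg fun ω => (h01 i ω).1
  simp only [← Finset.sum_apply]
  refine measureReal_ge_le_exp_of_mgf_le (hsum.trans hm) hη0 hη1
    (hind.integrable_exp_mul_sum hX fun i _ =>
      integrable_exp_mul_of_mem_Icc (hX i).aemeasurable (ae_of_all _ (h01 i)))
    ((mgf_sum_le_exp_mul_sum_integral hind hX h01 s _).trans ?_)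
  rw [exp_log (by linarith), add_sub_cancel_left, exp_le_exp]
  gcongr

theorem measureReal_sum_le_le_exp (hind : iIndepFun X μ) (hX : ∀ i, Measurable (X i))
    (h01 : ∀ i ω, X i ω ∈ Set.Icc (0 : ℝ) 1) (s : Finset ι) {m η : ℝ} (hm0 : 0 ≤ m)
    (hm : m ≤ ∑ i ∈ s, μ[X i]) (hη0 : 0 ≤ η) (hη1 : η ≤ 1) :
    μ.real {ω | ∑ i ∈ s, X i ω ≤ (1 - η) * m} ≤ exp (-(η ^ 2 / 6 * m)) := by
  simp only [← Finset.sum_apply]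
  refine measureReal_le_le_exp_of_mgf_le hm0 hη0 hη1
    (hind.integrable_exp_mul_sum hX fun i _ =>
      integrable_exp_mul_of_mem_Icc (hX i).aemeasurable (ae_of_all _ (h01 i)))
    ((mgf_sum_le_exp_mul_sum_integral hind hX h01 s _).trans ?_)
  rw [exp_log (by linarith), exp_le_exp]
  nlinarith

end Chernoff

section Resampling

open MeasureTheory ProbabilityTheory

variable {ι : Type*} [Fintype ι] {Ω : ι → Type*} [∀ i, MeasurableSpace (Ω i)]
  (ν : ∀ i, Measure (Ω i)) [∀ i, IsProbabilityMeasure (ν i)]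

theorem measurePreserving_piecewise [DecidableEq ι] (A : Finset ι) :
    MeasurePreserving (fun x : (∀ i, Ω i) × (∀ i, Ω i) => A.piecewise x.2 x.1)
      ((Measure.pi ν).prod (Measure.pi ν)) (Measure.pi ν) := by
  have hmeas : Measurable fun x : (∀ i, Ω i) × (∀ i, Ω i) => A.piecewise x.2 x.1 := by
    refine measurable_pi_iff.2 fun i => ?_
    by_cases hi : i ∈ A <;> simp only [Finset.piecewise, hi, if_true, if_false] <;> fun_prop
  refine ⟨hmeas, (Measure.pi_eq fun s hs => ?_).symm⟩
  have hpre : (fun x : (∀ i, Ω i) × (∀ i, Ω i) => A.piecewise x.2 x.1) ⁻¹' Set.univ.pi s =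
      (Set.univ.pi fun i => if i ∈ A then Set.univ else s i) ×ˢ
        (Set.univ.pi fun i => if i ∈ A then s i else Set.univ) := by
    ext x
    simp only [Set.mem_preimage, Set.mem_pi, Set.mem_prod, ← forall_and]
    refine forall_congr' fun i => ?_
    by_cases hi : i ∈ A <;> simp [hi]
  rw [Measure.map_apply hmeas (.univ_pi hs), hpre, Measure.prod_prod, Measure.pi_pi,
    Measure.pi_pi, ← Finset.prod_mul_distrib]
  refine Finset.prod_congr rfl fun i _ => ?_
  by_cases hi : i ∈ A <;> simp [hi]

theorem integral_eq_integral_piecewise [DecidableEq ι] (A : Finset ι) {f : (∀ i, Ω i) → ℝ}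
    (hf : Integrable f (Measure.pi ν)) :
    ∫ c, f c ∂Measure.pi ν =
      ∫ c, ∫ c', f (A.piecewise c' c) ∂Measure.pi ν ∂Measure.pi ν := by
  have hmp := measurePreserving_piecewise ν A
  rw [← integral_prod (fun x => f (A.piecewise x.2 x.1)) (hmp.integrable_comp_of_integrable hf),
    ← hmp.map_eq, integral_map hmp.measurable.aemeasurable (hmp.map_eq.symm ▸ hf.1), hmp.map_eq]

theorem measureReal_le_of_forall_piecewise [DecidableEq ι] (A : Finset ι) {E : Set (∀ i, Ω i)}
    (hE : MeasurableSet E) {p : ℝ}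
    (h : ∀ c, (Measure.pi ν).real {c' | A.piecewise c' c ∈ E} ≤ p) :
    (Measure.pi ν).real E ≤ p := by
  have hmp := measurePreserving_piecewise ν A
  calc (Measure.pi ν).real E
      = ∫ c, ∫ c', E.indicator 1 (A.piecewise c' c) ∂Measure.pi ν ∂Measure.pi ν := by
        rw [← integral_indicator_one hE]
        exact integral_eq_integral_piecewise ν A ((integrable_const 1).indicator hE)
    _ = ∫ c, (Measure.pi ν).real {c' | A.piecewise c' c ∈ E} ∂Measure.pi ν :=
        integral_congr_ae <| ae_of_all _ fun c =>
          integral_indicator_one (hmp.measurable.comp measurable_prodMk_left hE)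
    _ ≤ ∫ _, p ∂Measure.pi ν :=
        integral_mono_of_nonneg (ae_of_all _ fun c => measureReal_nonneg) (integrable_const p)
          (ae_of_all _ h)
    _ = p := by simp

theorem measureReal_inter_eq_mul_of_dependsOn {A B : Set ι} (hAB : Disjoint A B)
    {E F : Set (∀ i, Ω i)} (hE : MeasurableSet E) (hF : MeasurableSet F)
    (hEA : DependsOn (· ∈ E) A) (hFB : DependsOn (· ∈ F) B) :
    (Measure.pi ν).real (E ∩ F) = (Measure.pi ν).real E * (Measure.pi ν).real F := by
  classical
  have hpre : (fun x : (∀ i, Ω i) × (∀ i, Ω i) => A.toFinset.piecewise x.2 x.1) ⁻¹' (E ∩ F) =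
      F ×ˢ E := by
    ext x
    have hxE : A.toFinset.piecewise x.2 x.1 ∈ E ↔ x.2 ∈ E :=
      Iff.of_eq <| hEA fun i hi => by simp [hi]
    have hxF : A.toFinset.piecewise x.2 x.1 ∈ F ↔ x.1 ∈ F :=
      Iff.of_eq <| hFB fun i hi => by simp [hAB.notMem_of_mem_right hi]
    simp only [Set.mem_preimage, Set.mem_inter_iff, hxE, hxF, Set.mem_prod, and_comm]
  rw [← (measurePreserving_piecewise ν A.toFinset).measureReal_preimage
    (hE.inter hF).nullMeasurableSet, hpre, measureReal_prod_prod, mul_comm]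

end Resampling

section LocalLemma

open MeasureTheory ProbabilityTheory

theorem iInter_sdiff_compl_subset {Ω ι : Type*} [DecidableEq ι] (A : ι → Set Ω) (S T : Finset ι) :
    ⋂ j ∈ S \ T, (A j)ᶜ ⊆ (⋂ j ∈ S, (A j)ᶜ) ∪ ⋃ k ∈ T, A k ∩ ⋂ j ∈ S \ T, (A j)ᶜ := by
  intro ω hω
  by_cases hωS : ω ∈ ⋂ j ∈ S, (A j)ᶜ
  · exact .inl hωS
  · simp only [Set.mem_iInter, Set.mem_compl_iff, not_forall, not_not] at hωS
    obtain ⟨k, hkS, hk⟩ := hωS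
    refine .inr (Set.mem_biUnion (x := k) ?_ ⟨hk, hω⟩)
    by_contra hkT
    exact Set.mem_iInter₂.1 hω k (Finset.mem_sdiff.2 ⟨hkS, hkT⟩) hk

theorem measureReal_inter_iInter_compl_le {Ω ι : Type*} {mΩ : MeasurableSpace Ω}
    {μ : Measure Ω} [IsFiniteMeasure μ] {A : ι → Set Ω} {Γ : ι → Finset ι} {p : ℝ} {Δ : ℕ}
    (hp : 0 ≤ p) (hΓ : ∀ i, (Γ i).card ≤ Δ) (hpΔ : 4 * p * Δ ≤ 1)
    (hind : ∀ i, ∀ T : Finset ι, Disjoint T (Γ i) →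
      μ.real (A i ∩ ⋂ j ∈ T, (A j)ᶜ) ≤ p * μ.real (⋂ j ∈ T, (A j)ᶜ)) (S : Finset ι) (i : ι) :
    μ.real (A i ∩ ⋂ j ∈ S, (A j)ᶜ) ≤ 2 * p * μ.real (⋂ j ∈ S, (A j)ᶜ) := by
  classical
  induction S using Finset.strongInduction generalizing i with
  | H S ih =>
  have hfar : μ.real (A i ∩ ⋂ j ∈ S, (A j)ᶜ) ≤ p * μ.real (⋂ j ∈ S \ Γ i, (A j)ᶜ) :=
    (measureReal_mono <| Set.inter_subset_inter_right _ <|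
      Set.biInter_subset_biInter_left fun _ hj => (Finset.mem_sdiff.1 hj).1).trans
      (hind i _ Finset.sdiff_disjoint)
  by_cases hS : Disjoint S (Γ i)
  · rw [Finset.sdiff_eq_self_of_disjoint hS] at hfar
    nlinarith [measureReal_nonneg (μ := μ) (s := ⋂ j ∈ S, (A j)ᶜ)]
  have hlt : S \ Γ i ⊂ S := sdiff_lt_left.2 (mt disjoint_comm.1 hS)
  have hnear : μ.real (⋃ k ∈ Γ i, A k ∩ ⋂ j ∈ S \ Γ i, (A j)ᶜ) ≤
      Δ * (2 * p * μ.real (⋂ j ∈ S \ Γ i, (A j)ᶜ)) :=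
    calc _ ≤ ∑ k ∈ Γ i, μ.real (A k ∩ ⋂ j ∈ S \ Γ i, (A j)ᶜ) :=
          measureReal_biUnion_finset_le _ _
      _ ≤ (Γ i).card • (2 * p * μ.real (⋂ j ∈ S \ Γ i, (A j)ᶜ)) :=
          Finset.sum_le_card_nsmul _ _ _ fun k _ => ih _ hlt k
      _ ≤ _ := by rw [nsmul_eq_mul]; gcongr; exact hΓ i
  have hhalf : μ.real (⋂ j ∈ S \ Γ i, (A j)ᶜ) ≤ 2 * μ.real (⋂ j ∈ S, (A j)ᶜ) := by
    have := (measureReal_mono (μ := μ) (iInter_sdiff_compl_subset A S (Γ i))).trans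
      (measureReal_union_le _ _)
    nlinarith [measureReal_nonneg (μ := μ) (s := ⋂ j ∈ S \ Γ i, (A j)ᶜ)]
  nlinarith [mul_le_mul_of_nonneg_left hhalf hp]

theorem measureReal_iInter_compl_pos {Ω ι : Type*} {mΩ : MeasurableSpace Ω}
    {μ : Measure Ω} [IsProbabilityMeasure μ] {A : ι → Set Ω} {Γ : ι → Finset ι} {p : ℝ} {Δ : ℕ}
    (hp : 0 ≤ p) (hp2 : 2 * p < 1) (hΓ : ∀ i, (Γ i).card ≤ Δ) (hpΔ : 4 * p * Δ ≤ 1)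
    (hind : ∀ i, ∀ T : Finset ι, Disjoint T (Γ i) →
      μ.real (A i ∩ ⋂ j ∈ T, (A j)ᶜ) ≤ p * μ.real (⋂ j ∈ T, (A j)ᶜ)) (S : Finset ι) :
    0 < μ.real (⋂ j ∈ S, (A j)ᶜ) := by
  classical
  induction S using Finset.induction_on with
  | empty => simp
  | insert i S _ ih =>
    have hcover : (⋂ j ∈ S, (A j)ᶜ) ⊆
        (⋂ j ∈ insert i S, (A j)ᶜ) ∪ A i ∩ ⋂ j ∈ S, (A j)ᶜ := by
      rw [Finset.set_biInter_insert]
      intro ω hω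
      by_cases hωi : ω ∈ A i
      · exact .inr ⟨hωi, hω⟩
      · exact .inl ⟨hωi, hω⟩
    have hstep := measureReal_inter_iInter_compl_le hp hΓ hpΔ hind S i
    have := (measureReal_mono (μ := μ) hcover).trans (measureReal_union_le _ _)
    nlinarith

theorem exists_forall_notMem_of_dependsOn {ι κ : Type*} [Fintype ι] [Finite κ]
    {Ω : ι → Type*} [∀ i, MeasurableSpace (Ω i)] (ν : ∀ i, Measure (Ω i))
    [∀ i, IsProbabilityMeasure (ν i)] {A : κ → Set (∀ i, Ω i)} (hA : ∀ k, MeasurableSet (A k))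
    {K : κ → Set ι} (hK : ∀ k, DependsOn (· ∈ A k) (K k)) {Γ : κ → Finset κ}
    (hKΓ : ∀ k, ∀ l ∉ Γ k, Disjoint (K k) (K l)) {p : ℝ} {Δ : ℕ} (hp2 : 2 * p < 1)
    (hΓ : ∀ k, (Γ k).card ≤ Δ) (hpΔ : 4 * p * Δ ≤ 1)
    (hAp : ∀ k, (Measure.pi ν).real (A k) ≤ p) :
    ∃ c, ∀ k, c ∉ A k := by
  cases nonempty_fintype κ
  cases isEmpty_or_nonempty κ with
  | inl _ =>
    have := fun i => nonempty_of_isProbabilityMeasure (ν i)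
    exact ⟨Classical.arbitrary _, isEmptyElim⟩
  | inr hκ =>
  have hp : 0 ≤ p := measureReal_nonneg.trans (hAp hκ.some)
  have hpos := measureReal_iInter_compl_pos (μ := Measure.pi ν) (A := A) hp hp2 hΓ hpΔ
    (fun k T hT => ?_) Finset.univ
  · obtain ⟨c, hc⟩ := nonempty_of_measureReal_ne_zero hpos.ne'
    exact ⟨c, fun k => Set.mem_iInter₂.1 hc k (Finset.mem_univ k)⟩
  · have hT' : DependsOn (· ∈ ⋂ l ∈ T, (A l)ᶜ) (⋃ l ∈ T, K l) := fun c c' hcc' => by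
      simp only [Set.mem_iInter, Set.mem_compl_iff]
      refine propext <| forall₂_congr fun l hl => not_congr <| Iff.of_eq <| hK l fun i hi => ?_
      exact hcc' i (Set.mem_biUnion hl hi)
    rw [measureReal_inter_eq_mul_of_dependsOn ν _ (hA k)
      (Finset.measurableSet_biInter T fun l _ => (hA l).compl) (hK k) hT']
    · exact mul_le_mul_of_nonneg_right (hAp k) measureReal_nonneg
    · exact Set.disjoint_iUnion₂_right.2 fun l hl => hKΓ k l (Finset.disjoint_left.1 hT hl)

end LocalLemma

section Hits

variable {V P : Type*} [DecidableEq P]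

/-- The vertices `u` of `s` whose colour lands in the prescribed set `Y u`. -/
def hits (Y : V → Finset P) (s : Finset V) (c : V → P) : Finset V :=
  {u ∈ s | c u ∈ Y u}

theorem mem_hits {Y : V → Finset P} {s : Finset V} {c : V → P} {u : V} :
    u ∈ hits Y s c ↔ u ∈ s ∧ c u ∈ Y u :=
  Finset.mem_filter

end Hits

section UniformColoring

open MeasureTheory ProbabilityTheory Real Finset

/-- The law of a uniformly random colouring of `V` with colours in `P`: the colours of the vertices
are independent and uniform. -/
noncomputable abbrev uniformColoring (V P : Type*) [Fintype V] [MeasurableSpace P] :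
    Measure (V → P) :=
  Measure.pi fun _ => uniformOn Set.univ

variable {V P : Type*} [Fintype V] [Fintype P] [MeasurableSpace P] [DiscreteMeasurableSpace P]

theorem integral_uniformOn_univ (g : P → ℝ) :
    ∫ y, g y ∂uniformOn Set.univ = (∑ y, g y) / Fintype.card P := by
  have hsingle : ∀ y : P, (uniformOn (Set.univ : Set P)).real {y} = (Fintype.card P : ℝ)⁻¹ := by
    intro y
    simp [Measure.real, uniformOn_univ]
  rw [integral_fintype .of_finite]
  simp only [hsingle, smul_eq_mul, ← Finset.mul_sum]
  rw [div_eq_inv_mul]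

variable [Nonempty P]

theorem integral_uniformColoring_eval (u : V) (g : P → ℝ) :
    ∫ c, g (c u) ∂uniformColoring V P = (∑ y, g y) / Fintype.card P := by
  have hmp := measurePreserving_eval (fun _ : V => uniformOn (Set.univ : Set P)) u
  rw [← integral_uniformOn_univ, ← hmp.map_eq, integral_map hmp.measurable.aemeasurable
    Measurable.of_discrete.aestronglyMeasurable]

theorem uniformColoring_sum_ge_le {g : V → P → ℝ} (h01 : ∀ u y, g u y ∈ Set.Icc (0 : ℝ) 1)
    (s : Finset V) {m η : ℝ} (hm : ∑ u ∈ s, (∑ y, g u y) / Fintype.card P ≤ m)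
    (hη0 : 0 ≤ η) (hη1 : η ≤ 1) :
    (uniformColoring V P).real {c | (1 + η) * m ≤ ∑ u ∈ s, g u (c u)} ≤
      exp (-(η ^ 2 / 6 * m)) :=
  measureReal_sum_ge_le_exp (iIndepFun_pi fun _ => Measurable.of_discrete.aemeasurable)
    (fun _ => .of_discrete) (fun u c => h01 u (c u)) s
    (by simpa only [integral_uniformColoring_eval] using hm) hη0 hη1

theorem uniformColoring_sum_le_le {g : V → P → ℝ} (h01 : ∀ u y, g u y ∈ Set.Icc (0 : ℝ) 1)
    (s : Finset V) {m η : ℝ} (hm0 : 0 ≤ m)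
    (hm : m ≤ ∑ u ∈ s, (∑ y, g u y) / Fintype.card P) (hη0 : 0 ≤ η) (hη1 : η ≤ 1) :
    (uniformColoring V P).real {c | ∑ u ∈ s, g u (c u) ≤ (1 - η) * m} ≤
      exp (-(η ^ 2 / 6 * m)) :=
  measureReal_sum_le_le_exp (iIndepFun_pi fun _ => Measurable.of_discrete.aemeasurable)
    (fun _ => .of_discrete) (fun u c => h01 u (c u)) s hm0
    (by simpa only [integral_uniformColoring_eval] using hm) hη0 hη1

variable [DecidableEq P]

theorem uniformColoring_sum_hits_ge_le {w : V → ℝ} (hw : ∀ u, w u ∈ Set.Icc (0 : ℝ) 1)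
    (Y : V → Finset P) (s : Finset V) {m η : ℝ}
    (hm : ∑ u ∈ s, w u * ((Y u).card / Fintype.card P) ≤ m) (hη0 : 0 ≤ η) (hη1 : η ≤ 1) :
    (uniformColoring V P).real {c | (1 + η) * m ≤ ∑ u ∈ hits Y s c, w u} ≤
      exp (-(η ^ 2 / 6 * m)) := by
  have h01 : ∀ u y, (if y ∈ Y u then w u else 0) ∈ Set.Icc (0 : ℝ) 1 := fun u y => by
    split_ifs
    exacts [hw u, ⟨le_rfl, zero_le_one⟩]
  have h := uniformColoring_sum_ge_le h01 s (m := m) (η := η) ?_ hη0 hη1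
  · simpa only [hits, sum_filter] using h
  · simpa [Finset.sum_ite_mem, mul_div_assoc, mul_comm] using hm

theorem uniformColoring_card_hits_ge_le (Y : V → Finset P) (s : Finset V) {m η : ℝ}
    (hm : ∑ u ∈ s, ((Y u).card / Fintype.card P : ℝ) ≤ m) (hη0 : 0 ≤ η) (hη1 : η ≤ 1) :
    (uniformColoring V P).real {c | (1 + η) * m ≤ ((hits Y s c).card : ℝ)} ≤
      exp (-(η ^ 2 / 6 * m)) := by
  simpa using uniformColoring_sum_hits_ge_le (w := fun _ => 1) (by simp) Y s (by simpa using hm)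
    hη0 hη1

theorem uniformColoring_card_hits_le_le (Y : V → Finset P) (s : Finset V) {m η : ℝ} (hm0 : 0 ≤ m)
    (hm : m ≤ ∑ u ∈ s, ((Y u).card / Fintype.card P : ℝ)) (hη0 : 0 ≤ η) (hη1 : η ≤ 1) :
    (uniformColoring V P).real {c | ((hits Y s c).card : ℝ) ≤ (1 - η) * m} ≤
      exp (-(η ^ 2 / 6 * m)) := by
  have h01 : ∀ u y, (if y ∈ Y u then (1 : ℝ) else 0) ∈ Set.Icc (0 : ℝ) 1 := fun u y => by
    split_ifs <;> simp
  have h := uniformColoring_sum_le_le h01 s hm0 (by simpa using hm) hη0 hη1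
  simpa only [hits, card_filter, Nat.cast_sum, Nat.cast_ite, Nat.cast_one, Nat.cast_zero] using h

end UniformColoring

section Repeats

open MeasureTheory ProbabilityTheory Real Finset

variable {V P : Type*} [DecidableEq P]

/-- The number of vertices of `s` with colour in `Y`, not counting one representative of each
colour that occurs. -/
def repeats (Y : Finset P) (s : Finset V) (c : V → P) : ℕ :=
  #(hits (fun _ => Y) s c) - #((hits (fun _ => Y) s c).image c)

/-- The exponential weight `(1 + t) ^ repeats`, set to zero once `s` has more than `K` hits. -/
noncomputable def truncatedWeight (Y : Finset P) (K t : ℝ) (s : Finset V) (c : V → P) : ℝ :=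
  if (#(hits (fun _ => Y) s c) : ℝ) ≤ K then (1 + t) ^ repeats Y s c else 0

theorem truncatedWeight_nonneg (Y : Finset P) (K : ℝ) {t : ℝ} (ht : 0 ≤ t) (s : Finset V)
    (c : V → P) : 0 ≤ truncatedWeight Y K t s c := by
  unfold truncatedWeight
  positivity

theorem truncatedWeight_mul_card_image_le (Y : Finset P) (K : ℝ) {t : ℝ} (ht : 0 ≤ t)
    (s : Finset V) (c : V → P) :
    truncatedWeight Y K t s c * #((hits (fun _ => Y) s c).image c) ≤
      truncatedWeight Y K t s c * K := by
  by_cases hK : (#(hits (fun _ => Y) s c) : ℝ) ≤ K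
  · exact mul_le_mul_of_nonneg_left ((Nat.cast_le.2 card_image_le).trans hK)
      (truncatedWeight_nonneg Y K ht s c)
  · simp [truncatedWeight, hK]

section Update

variable [DecidableEq V]

theorem hits_update {Y : V → Finset P} {s : Finset V} {a : V} (ha : a ∉ s) (c : V → P) (y : P) :
    hits Y s (Function.update c a y) = hits Y s c :=
  filter_congr fun u hu => by rw [Function.update_of_ne (ne_of_mem_of_not_mem hu ha)]

theorem image_hits_update {Y : V → Finset P} {s : Finset V} {a : V} (ha : a ∉ s) (c : V → P)
    (y : P) :
    (hits Y s c).image (Function.update c a y) = (hits Y s c).image c :=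
  image_congr fun _ hu =>
    Function.update_of_ne (ne_of_mem_of_not_mem (mem_hits.1 (mem_coe.1 hu)).1 ha) ..

theorem repeats_insert_update (Y : Finset P) {s : Finset V} {a : V} (ha : a ∉ s) (c : V → P)
    (y : P) :
    repeats Y (insert a s) (Function.update c a y) =
      repeats Y s c + if y ∈ (hits (fun _ => Y) s c).image c then 1 else 0 := by
  have himage : #((hits (fun _ => Y) s c).image c) ≤ #(hits (fun _ => Y) s c) := card_image_le
  have hhits : hits (fun _ => Y) (insert a s) (Function.update c a y) =
      if y ∈ Y then insert a (hits (fun _ => Y) s c) else hits (fun _ => Y) s c := by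
    rw [hits, filter_insert, Function.update_self]
    exact congrArg (fun t => if y ∈ Y then insert a t else t) (hits_update ha c y)
  have haT : a ∉ hits (fun _ => Y) s c := fun h => ha (mem_hits.1 h).1
  by_cases hy : y ∈ Y
  · rw [repeats, repeats, hhits, if_pos hy, image_insert, Function.update_self,
      image_hits_update ha, card_insert_of_notMem haT, card_insert_eq_ite]
    split_ifs <;> omega
  · have hyT : y ∉ (hits (fun _ => Y) s c).image c := fun h => by
      obtain ⟨u, hu, rfl⟩ := mem_image.1 h
      exact hy (mem_hits.1 hu).2
    rw [repeats, repeats, hhits, if_neg hy, image_hits_update ha, if_neg hyT, add_zero]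

theorem truncatedWeight_insert_update_le (Y : Finset P) (K : ℝ) {t : ℝ} (ht : 0 ≤ t)
    {s : Finset V} {a : V} (ha : a ∉ s) (c : V → P) (y : P) :
    truncatedWeight Y K t (insert a s) (Function.update c a y) ≤
      truncatedWeight Y K t s c *
        (1 + if y ∈ (hits (fun _ => Y) s c).image c then t else 0) := by
  have hcard : #(hits (fun _ => Y) s c) ≤
      #(hits (fun _ => Y) (insert a s) (Function.update c a y)) := by
    rw [← hits_update ha c y]
    exact card_le_card (filter_subset_filter _ (subset_insert a s))
  by_cases hK : (#(hits (fun _ => Y) (insert a s) (Function.update c a y)) : ℝ) ≤ K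
  · have hK' : (#(hits (fun _ => Y) s c) : ℝ) ≤ K := (Nat.cast_le.2 hcard).trans hK
    rw [truncatedWeight, if_pos hK, truncatedWeight, if_pos hK', repeats_insert_update Y ha,
      pow_add]
    split_ifs <;> simp
  · rw [truncatedWeight, if_neg hK]
    have := truncatedWeight_nonneg Y K ht s c
    positivity

end Update

variable [Fintype V] [Fintype P] [Nonempty P] [MeasurableSpace P] [DiscreteMeasurableSpace P]

theorem integral_truncatedWeight_insert_le [DecidableEq V] (Y : Finset P) (K : ℝ) {t : ℝ}
    (ht : 0 ≤ t) {s : Finset V} {a : V} (ha : a ∉ s) :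
    ∫ c, truncatedWeight Y K t (insert a s) c ∂uniformColoring V P ≤
      (∫ c, truncatedWeight Y K t s c ∂uniformColoring V P) * (1 + t * (K / Fintype.card P)) := by
  rw [integral_eq_integral_piecewise _ {a} .of_finite, ← integral_mul_const]
  refine integral_mono .of_finite .of_finite fun c => ?_
  simp only [piecewise_singleton]
  set T := (hits (fun _ => Y) s c).image c
  calc ∫ c', truncatedWeight Y K t (insert a s) (Function.update c a (c' a)) ∂uniformColoring V P
      ≤ ∫ c', truncatedWeight Y K t s c * (1 + if c' a ∈ T then t else 0) ∂uniformColoring V P :=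
        integral_mono .of_finite .of_finite fun c' =>
          truncatedWeight_insert_update_le Y K ht ha c (c' a)
    _ = truncatedWeight Y K t s c * (1 + t * (#T / Fintype.card P)) := by
        rw [integral_const_mul,
          integral_uniformColoring_eval a (fun y => 1 + if y ∈ T then t else 0), sum_add_distrib,
          sum_ite_mem]
        simp only [sum_const, card_univ, nsmul_eq_mul, mul_one, univ_inter]
        field_simp
    _ ≤ truncatedWeight Y K t s c * (1 + t * (K / Fintype.card P)) := by
        have hexpand : ∀ x, truncatedWeight Y K t s c * (1 + t * (x / Fintype.card P)) =
            truncatedWeight Y K t s c + truncatedWeight Y K t s c * x * (t / Fintype.card P) :=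
          fun x => by ring
        rw [hexpand, hexpand]
        exact add_le_add le_rfl (mul_le_mul_of_nonneg_right
          (truncatedWeight_mul_card_image_le Y K ht s c) (by positivity))

theorem integral_truncatedWeight_le (Y : Finset P) {K t : ℝ} (hK : 0 ≤ K) (ht : 0 ≤ t)
    (s : Finset V) :
    ∫ c, truncatedWeight Y K t s c ∂uniformColoring V P ≤
      exp (t * (#s * (K / Fintype.card P))) := by
  classical
  induction s using Finset.induction_on with
  | empty => simp [truncatedWeight, repeats, hits, hK]
  | insert a s ha ih =>
    calc _ ≤ (∫ c, truncatedWeight Y K t s c ∂uniformColoring V P) *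
          (1 + t * (K / Fintype.card P)) := integral_truncatedWeight_insert_le Y K ht ha
      _ ≤ exp (t * (#s * (K / Fintype.card P))) * exp (t * (K / Fintype.card P)) := by
          gcongr
          rw [add_comm]
          exact add_one_le_exp _
      _ = _ := by
          rw [← exp_add, card_insert_of_notMem ha]
          push_cast
          ring_nf

theorem uniformColoring_repeats_ge_le (Y : Finset P) {K m η : ℝ} (hK : 0 ≤ K) (s : Finset V)
    (hm : m = #s * (K / Fintype.card P)) (hη0 : 0 ≤ η) (hη1 : η ≤ 1) :
    (uniformColoring V P).real
        {c | (#(hits (fun _ => Y) s c) : ℝ) ≤ K ∧ (1 + η) * m ≤ repeats Y s c} ≤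
      exp (-(η ^ 2 / 6 * m)) := by
  have hm0 : 0 ≤ m := by rw [hm]; positivity
  set A : Set (V → P) := {c | (#(hits (fun _ => Y) s c) : ℝ) ≤ K}
  have hmgf : mgf (fun c => (repeats Y s c : ℝ)) ((uniformColoring V P).restrict A)
      (log (1 + η / 2)) = ∫ c, truncatedWeight Y K (η / 2) s c ∂uniformColoring V P := by
    rw [mgf, ← integral_indicator .of_discrete]
    refine integral_congr_ae (ae_of_all _ fun c => ?_)
    simp [truncatedWeight, Set.indicator_apply, A, mul_comm (log _), exp_nat_mul,
      exp_log (show 0 < 1 + η / 2 by linarith)]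
  have h := measureReal_ge_le_exp_of_mgf_le (μ := (uniformColoring V P).restrict A) hm0 hη0 hη1
    .of_finite (hmgf.trans_le (hm ▸ integral_truncatedWeight_le Y hK (by linarith) s))
  rwa [measureReal_restrict_apply .of_discrete, Set.inter_comm] at h

end Repeats

section GoodVertices

open MeasureTheory ProbabilityTheory Real Finset

theorem exp_neg_chernoff_le {ν x : ℝ} (h : ν ≤ x) :
    exp (-((1 / 100 : ℝ) ^ 2 / 6 * x)) ≤ exp (-(ν / 60000)) := by
  rw [exp_le_exp]
  linarith

variable {V P : Type*}

/-- No vertex of `N` other than `u` has the colour of `u`. -/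
def UniquelyColored (N : Finset V) (c : V → P) (u : V) : Prop :=
  ∀ u' ∈ N, c u' = c u → u' = u

theorem not_uniquelyColored {N : Finset V} {c : V → P} {u : V} :
    ¬ UniquelyColored N c u ↔ ∃ u' ∈ N, c u' = c u ∧ u' ≠ u := by
  simp [UniquelyColored]

variable [DecidableEq V] [DecidableEq P]

instance (N : Finset V) (c : V → P) (u : V) : Decidable (UniquelyColored N c u) :=
  inferInstanceAs (Decidable (∀ u' ∈ N, c u' = c u → u' = u))

/-- The vertices of `U` with a colour in `Y` that is not forbidden for them by `Z` and not used
elsewhere in `N`. -/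
def goodVertices (Y : Finset P) (Z : V → Finset P) (N U : Finset V) (c : V → P) : Finset V :=
  {u ∈ U | c u ∈ Y ∧ c u ∉ Z u ∧ UniquelyColored N c u}

theorem mem_goodVertices {Y : Finset P} {Z : V → Finset P} {N U : Finset V} {c : V → P} {u : V} :
    u ∈ goodVertices Y Z N U c ↔ u ∈ U ∧ c u ∈ Y ∧ c u ∉ Z u ∧ UniquelyColored N c u :=
  mem_filter

theorem card_hits_not_uniquelyColored_le (Y : Finset P) (N : Finset V) (c : V → P) :
    #{u ∈ hits (fun _ => Y) N c | ¬ UniquelyColored N c u} ≤ 2 * repeats Y N c := by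
  set T := hits (fun _ => Y) N c
  set W := {u ∈ T | ¬ UniquelyColored N c u}
  have hsplit : #{u ∈ T | UniquelyColored N c u} + #W = #T := card_filter_add_card_filter_not _
  have himage : #(T.image c) ≤ #{u ∈ T | UniquelyColored N c u} + #(W.image c) := by
    calc #(T.image c) = #(({u ∈ T | UniquelyColored N c u} ∪ W).image c) := by
          rw [filter_union_filter_not_eq]
      _ ≤ #({u ∈ T | UniquelyColored N c u}.image c) + #(W.image c) := by
          rw [image_union]
          exact card_union_le _ _
      _ ≤ _ := Nat.add_le_add_right card_image_le _
  have htwo : 2 * #(W.image c) ≤ #W := by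
    refine mul_card_image_le_card (f := c) W 2 fun y hy => ?_
    obtain ⟨u, hu, rfl⟩ := mem_image.1 hy
    obtain ⟨huT, hu'⟩ := mem_filter.1 hu
    obtain ⟨u', hu'N, hcu, hne⟩ := not_uniquelyColored.1 hu'
    have hu'W : u' ∈ W := by
      refine mem_filter.2 ⟨mem_hits.2 ⟨hu'N, hcu ▸ (mem_hits.1 huT).2⟩, fun h => ?_⟩
      exact hne (h u (mem_hits.1 huT).1 hcu.symm).symm
    exact one_lt_card.2 ⟨u', mem_filter.2 ⟨hu'W, hcu⟩, u, mem_filter.2 ⟨hu, rfl⟩, hne⟩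
  have : #(T.image c) ≤ #T := card_image_le
  change #W ≤ 2 * (#T - #(T.image c))
  omega

theorem card_hits_le_card_goodVertices_add (Y : Finset P) (Z : V → Finset P) {N U : Finset V}
    (hU : U ⊆ N) (c : V → P) :
    #(hits (fun _ => Y) U c) ≤
      #(goodVertices Y Z N U c) + #(hits Z U c) + 2 * repeats Y N c := by
  have hcover : hits (fun _ => Y) U c ⊆ goodVertices Y Z N U c ∪ hits Z U c ∪
      {u ∈ hits (fun _ => Y) N c | ¬ UniquelyColored N c u} := by
    intro u hu
    have huN := hU (mem_hits.1 hu).1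
    simp only [mem_union, goodVertices, mem_hits, mem_filter] at hu ⊢
    tauto
  calc _ ≤ _ := card_le_card hcover
    _ ≤ _ := card_union_le _ _
    _ ≤ _ := add_le_add (card_union_le _ _) (card_hits_not_uniquelyColored_le Y N c)

theorem setOf_card_goodVertices_lt_subset (Y : Finset P) (Z : V → Finset P) {N U : Finset V}
    (hU : U ⊆ N) {m m' r : ℝ} (hr : 3 / 4 * m ≤ r) (hm' : 101 / 100 * m' ≤ 9 / 200 * m) :
    {c : V → P | (#(goodVertices Y Z N U c) : ℝ) < 103 / 200 * m} ⊆
      ({c | (#(hits (fun _ => Y) U c) : ℝ) ≤ (1 - 1 / 100) * r} ∪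
        {c | (1 + 1 / 100) * (9 / 50 * r) ≤ (#(hits Z U c) : ℝ)}) ∪
      ({c | (1 + 1 / 100) * m ≤ (#(hits (fun _ => Y) N c) : ℝ)} ∪
        {c | (#(hits (fun _ => Y) N c) : ℝ) ≤ (1 + 1 / 100) * m ∧
          (1 + 1 / 100) * m' ≤ repeats Y N c}) := by
  intro c hc
  by_contra hnot
  simp only [Set.mem_union, Set.mem_ofPred_eq, not_or, not_le, not_and] at hc hnot
  obtain ⟨⟨hYU, hZU⟩, hYN, hrep⟩ := hnot
  have hrep := hrep hYN.le
  have hsum : (#(hits (fun _ => Y) U c) : ℝ) ≤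
      #(goodVertices Y Z N U c) + #(hits Z U c) + 2 * repeats Y N c := by
    exact_mod_cast card_hits_le_card_goodVertices_add Y Z hU c
  linarith

variable [Fintype V] [Fintype P] [Nonempty P] [MeasurableSpace P] [DiscreteMeasurableSpace P]

theorem uniformColoring_card_goodVertices_lt_le (Y : Finset P) (Z : V → Finset P) {N U : Finset V}
    (hU : U ⊆ N) (hUN : 3 / 4 * (#N : ℝ) ≤ #U) (hNP : 23 * (#N : ℝ) ≤ Fintype.card P)
    (hZ : ∀ u ∈ U, (#(Z u) : ℝ) ≤ 9 / 50 * #Y) {m ν : ℝ}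
    (hm : m = #N * (#Y / Fintype.card P)) (hν1 : ν ≤ 3 / 25 * m)
    (hν2 : ν ≤ #N * (m / Fintype.card P)) :
    (uniformColoring V P).real {c | (#(goodVertices Y Z N U c) : ℝ) < 103 / 200 * m} ≤
      4 * exp (-(ν / 60000)) := by
  have hP : (0 : ℝ) < Fintype.card P := by exact_mod_cast Fintype.card_pos
  set r : ℝ := #U * (#Y / Fintype.card P)
  have hr : 3 / 4 * m ≤ r := by
    rw [hm, ← mul_assoc]
    exact mul_le_mul_of_nonneg_right hUN (by positivity)
  have hm0 : 0 ≤ m := by rw [hm]; positivity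
  have hmP0 : 0 ≤ #N * (m / Fintype.card P) := by positivity
  have hmP : #N * (m / Fintype.card P) ≤ m / 23 := by
    rw [← mul_div_assoc, div_le_div_iff₀ hP (by norm_num)]
    nlinarith
  have hfewHits := uniformColoring_card_hits_le_le (V := V) (fun _ => Y) U (m := r) (η := 1 / 100)
    (by positivity) (by simp [r]) (by norm_num) (by norm_num)
  have hforbidden := uniformColoring_card_hits_ge_le Z U (m := 9 / 50 * r) (η := 1 / 100)
    ((sum_le_sum fun u hu => div_le_div_of_nonneg_right (hZ u hu) hP.le).trans_eq
      (by simp only [r, sum_const, nsmul_eq_mul]; ring)) (by norm_num) (by norm_num)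
  have hmanyHits := uniformColoring_card_hits_ge_le (V := V) (fun _ => Y) N (m := m)
    (η := 1 / 100) (by simp [hm]) (by norm_num) (by norm_num)
  have hrepeats := uniformColoring_repeats_ge_le (V := V) Y (K := (1 + 1 / 100) * m)
    (η := 1 / 100) (by positivity) N rfl (by norm_num) (by norm_num)
  set m' : ℝ := #N * ((1 + 1 / 100) * m / Fintype.card P)
  have hm' : m' = 101 / 100 * (#N * (m / Fintype.card P)) := by simp only [m']; ring
  calc _ ≤ _ := measureReal_mono (setOf_card_goodVertices_lt_subset Y Z hU hr
          (show 101 / 100 * m' ≤ 9 / 200 * m by linarith))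
    _ ≤ _ := (measureReal_union_le _ _).trans
        (add_le_add (measureReal_union_le _ _) (measureReal_union_le _ _))
    _ ≤ _ := add_le_add
        (add_le_add (hfewHits.trans (exp_neg_chernoff_le (ν := ν) (by linarith)))
          (hforbidden.trans (exp_neg_chernoff_le (ν := ν) (by linarith))))
        (add_le_add (hmanyHits.trans (exp_neg_chernoff_le (ν := ν) (by linarith)))
          (hrepeats.trans (exp_neg_chernoff_le (ν := ν) (by linarith))))
    _ = 4 * exp (-(ν / 60000)) := by ring

end GoodVertices

section LocalOptimum

open Finset

variable {V : Type*} [Fintype V]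

theorem sum_sum_eq_two_mul_sum_add_of_symm [DecidableEq V] {f : V → V → ℕ}
    (hsymm : ∀ a b, f a b = f b a) {v : V} (hv : f v v = 0) :
    ∑ a, ∑ b, f a b =
      2 * ∑ b, f v b + ∑ a ∈ univ.erase v, ∑ b ∈ univ.erase v, f a b := by
  have hrow : ∑ a ∈ univ.erase v, f a v = ∑ b, f v b := by
    rw [← add_sum_erase univ (f v) (mem_univ v), hv, zero_add]
    exact sum_congr rfl fun a _ => hsymm a v
  rw [← add_sum_erase univ (fun a => ∑ b, f a b) (mem_univ v),
    sum_congr rfl fun a _ => (add_sum_erase univ (f a) (mem_univ v)).symm, sum_add_distrib, hrow]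
  ring

/- A colouring of least total monochromatic weight cannot be improved by recolouring `v`, so the
colour of `v` has at most average weight. -/
theorem exists_coloring_card_mul_sum_le (Q : Type*) [Fintype Q] [Nonempty Q] [DecidableEq Q]
    {w : V → V → ℕ} (hsymm : ∀ a b, w a b = w b a) (hdiag : ∀ a, w a a = 0) :
    ∃ c : V → Q, ∀ v, Fintype.card Q * ∑ v' with c v' = c v, w v v' ≤ ∑ v', w v v' := by
  classical
  obtain ⟨c, -, hmin⟩ := exists_min_image (univ : Finset (V → Q))
    (fun c => ∑ a, ∑ b, if c b = c a then w a b else 0) univ_nonempty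
  refine ⟨c, fun v => ?_⟩
  have hsplit (c : V → Q) := sum_sum_eq_two_mul_sum_add_of_symm (v := v)
    (f := fun a b => if c b = c a then w a b else 0) (fun a b => by simp only [hsymm, eq_comm])
    (by simp only [hdiag, ite_self])
  have hleast (q : Q) : ∑ v' with c v' = c v, w v v' ≤ ∑ v' with c v' = q, w v v' := by
    have hle := hmin (Function.update c v q) (mem_univ _)
    have hrow : ∑ b, (if Function.update c v q b = Function.update c v q v then w v b else 0) =
        ∑ b, if c b = q then w v b else 0 := by
      refine sum_congr rfl fun b _ => ?_
      rcases eq_or_ne b v with rfl | hb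
      · simp only [hdiag, ite_self]
      · rw [Function.update_of_ne hb, Function.update_self]
    have hrest : ∑ a ∈ univ.erase v, ∑ b ∈ univ.erase v,
        (if Function.update c v q b = Function.update c v q a then w a b else 0) =
        ∑ a ∈ univ.erase v, ∑ b ∈ univ.erase v, if c b = c a then w a b else 0 :=
      sum_congr rfl fun a ha => sum_congr rfl fun b hb => by
        rw [Function.update_of_ne (ne_of_mem_erase ha), Function.update_of_ne (ne_of_mem_erase hb)]
    rw [hsplit c, hsplit (Function.update c v q), hrow, hrest] at hle
    rw [sum_filter, sum_filter]
    omega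
  calc Fintype.card Q * ∑ v' with c v' = c v, w v v'
      = ∑ _q : Q, ∑ v' with c v' = c v, w v v' := by simp
    _ ≤ ∑ q : Q, ∑ v' with c v' = q, w v v' := sum_le_sum fun q _ => hleast q
    _ = ∑ v', w v v' := sum_fiberwise univ c (w v)

end LocalOptimum

section BipartiteSubgraph

open Finset

theorem deg_eq_card_neighborFinset {V : Type*} (G : SimpleGraph V) (v : V)
    [Fintype (G.neighborSet v)] : deg G v = #(G.neighborFinset v) :=
  Set.ncard_eq_toFinset_card' _

theorem exists_colorable_two_le_deg_le_two_mul_deg {V : Type*} [Finite V] (G : SimpleGraph V) :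
    ∃ B ≤ G, B.Colorable 2 ∧ ∀ v, deg G v ≤ 2 * deg B v := by
  classical
  cases nonempty_fintype V
  obtain ⟨c, hc⟩ := exists_coloring_card_mul_sum_le Bool
    (w := fun a b => if G.Adj a b then 1 else 0)
    (fun a b => by simp only [G.adj_comm]) (fun a => by simp)
  let B : SimpleGraph V := G ⊓ (⊤ : SimpleGraph Bool).comap c
  have hB : B.Colorable 2 :=
    (Coloring.mk c fun h => h.2 : B.Coloring Bool).colorable
  refine ⟨B, inf_le_left, hB, fun v => ?_⟩
  have hsplit := card_filter_add_card_filter_not (s := G.neighborFinset v) fun u => c u = c v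
  have hmono : 2 * #{u ∈ G.neighborFinset v | c u = c v} ≤ #(G.neighborFinset v) := by
    simpa [← card_filter, filter_filter, and_comm, neighborFinset_eq_filter] using hc v
  have hdeg : B.neighborFinset v = {u ∈ G.neighborFinset v | ¬ c u = c v} := by
    ext u
    simp [B, eq_comm]
  rw [deg_eq_card_neighborFinset, deg_eq_card_neighborFinset, hdeg]
  omega

end BipartiteSubgraph

section BadNeighbors

open Finset

variable {V C : Type*} [Fintype V] [DecidableEq V]

/-- The number of common neighbours of `u` and `u'`. -/
def codegree (B : SimpleGraph V) [DecidableRel B.Adj] (u u' : V) : ℕ :=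
  #(B.neighborFinset u ∩ B.neighborFinset u')

theorem sum_codegree (B : SimpleGraph V) [DecidableRel B.Adj] (u : V) :
    ∑ u', codegree B u u' = ∑ w ∈ B.neighborFinset u, B.degree w := by
  have hcount (u' : V) :
      codegree B u u' = ∑ w ∈ B.neighborFinset u, if u' ∈ B.neighborFinset w then 1 else 0 := by
    rw [codegree, ← filter_mem_eq_inter, card_filter]
    simp only [mem_neighborFinset, B.adj_comm u']
  simp only [hcount]
  refine sum_comm.trans (sum_congr rfl fun w _ => ?_)
  rw [sum_ite_mem, univ_inter, ← card_eq_sum_ones, card_neighborFinset_eq_degree]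

theorem sum_codegree_le {B : SimpleGraph V} [DecidableRel B.Adj] {d : ℕ}
    (hd : ∀ w, B.degree w ≤ d) (u : V) : ∑ u', codegree B u u' ≤ d * B.degree u := by
  rw [sum_codegree, mul_comm, ← card_neighborFinset_eq_degree, ← smul_eq_mul]
  exact sum_le_card_nsmul _ _ _ fun w _ => hd w

variable [DecidableEq C]

/-- The neighbours `u` of `v` such that `v` shares its colour with another neighbour of `u`; their
number is `Bad B χ v`. -/
def badNeighbors (B : SimpleGraph V) [DecidableRel B.Adj] (χ : V → C) (v : V) : Finset V :=
  {u ∈ B.neighborFinset v | ¬ UniquelyColored (B.neighborFinset u) χ v}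

theorem mem_badNeighbors {B : SimpleGraph V} [DecidableRel B.Adj] {χ : V → C} {u v : V} :
    u ∈ badNeighbors B χ v ↔
      u ∈ B.neighborFinset v ∧ ∃ v' ∈ B.neighborFinset u, χ v' = χ v ∧ v' ≠ v := by
  rw [badNeighbors, mem_filter, not_uniquelyColored]

theorem badNeighbors_subset (B : SimpleGraph V) [DecidableRel B.Adj] (χ : V → C) (v : V) :
    badNeighbors B χ v ⊆ B.neighborFinset v :=
  filter_subset _ _

theorem card_badNeighbors_le_sum_codegree (B : SimpleGraph V) [DecidableRel B.Adj] (χ : V → C)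
    (v : V) :
    #(badNeighbors B χ v) ≤ ∑ v' with χ v' = χ v, if v' = v then 0 else codegree B v v' := by
  have hsub : badNeighbors B χ v ⊆ ({v' | χ v' = χ v} : Finset V).biUnion fun v' =>
      if v' = v then ∅ else B.neighborFinset v ∩ B.neighborFinset v' := by
    intro u hu
    obtain ⟨huv, v', hv'u, hcol, hne⟩ := mem_badNeighbors.1 hu
    refine mem_biUnion.2 ⟨v', mem_filter.2 ⟨mem_univ _, hcol⟩, ?_⟩
    rw [if_neg hne, mem_inter]
    exact ⟨huv, (B.mem_neighborFinset v' u).2 ((B.mem_neighborFinset u v').1 hv'u).symm⟩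
  refine (card_le_card hsub).trans (card_biUnion_le.trans_eq (sum_congr rfl fun v' _ => ?_))
  split_ifs <;> rfl

theorem exists_coloring_mul_card_badNeighbors_le (B : SimpleGraph V) [DecidableRel B.Adj]
    (Q : Type*) [Fintype Q] [Nonempty Q] [DecidableEq Q] {d k : ℕ} (hd : ∀ v, B.degree v ≤ d)
    (hQ : k * d ≤ Fintype.card Q) :
    ∃ c : V → Q, ∀ v, k * #(badNeighbors B c v) ≤ B.degree v := by
  obtain ⟨c, hc⟩ := exists_coloring_card_mul_sum_le Q
    (w := fun a b => if b = a then 0 else codegree B a b)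
    (fun a b => by simp only [codegree, inter_comm, eq_comm]) (fun a => if_pos rfl)
  refine ⟨c, fun v => ?_⟩
  rcases d.eq_zero_or_pos with rfl | hd0
  · have := card_le_card (badNeighbors_subset B c v)
    rw [card_neighborFinset_eq_degree, Nat.le_zero.1 (hd v), Nat.le_zero] at this
    simp [this]
  refine Nat.le_of_mul_le_mul_left ?_ hd0
  calc d * (k * #(badNeighbors B c v)) = k * d * #(badNeighbors B c v) := by ring
    _ ≤ Fintype.card Q * ∑ v' with c v' = c v, if v' = v then 0 else codegree B v v' :=
      Nat.mul_le_mul hQ (card_badNeighbors_le_sum_codegree B c v)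
    _ ≤ ∑ v', if v' = v then 0 else codegree B v v' := hc v
    _ ≤ ∑ v', codegree B v v' := sum_le_sum fun v' _ => by split_ifs <;> simp
    _ ≤ d * B.degree v := sum_codegree_le hd v

end BadNeighbors

section Palette

open MeasureTheory ProbabilityTheory Real Finset

theorem exists_notMem_of_measureReal_lt_one {Ω : Type*} [MeasurableSpace Ω] {μ : Measure Ω}
    [IsProbabilityMeasure μ] {E : Set Ω} (hE : μ.real E < 1) : ∃ ω, ω ∉ E := by
  by_contra! hall
  rw [Set.eq_univ_of_forall hall, probReal_univ] at hE
  exact lt_irrefl _ hE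

theorem measureReal_iUnion_le_card_mul {Ω ι : Type*} [MeasurableSpace Ω] [Fintype ι]
    {μ : Measure Ω} [IsFiniteMeasure μ] {E : ι → Set Ω} {p : ℝ} (hE : ∀ i, μ.real (E i) ≤ p) :
    μ.real (⋃ i, E i) ≤ Fintype.card ι * p :=
  (measureReal_iUnion_fintype_le E).trans
    ((sum_le_card_nsmul _ _ _ fun i _ => hE i).trans_eq (by simp))

variable {C ι : Type*} [Fintype C] [DecidableEq C] [Fintype ι]

/- Each colour joins `P` independently with probability `3 / 4`. -/
theorem exists_finset_three_quarters (S : ι → Finset C) {δ : ℝ} (hδ : 0 ≤ δ)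
    (hδC : δ ≤ Fintype.card C) (hS : ∀ i, δ ≤ #(S i))
    (hsmall : (Fintype.card ι + 2) * exp (-(δ / 4 / 60000)) < 1) :
    ∃ P : Finset C, 99 / 100 * (3 / 4 * (Fintype.card C : ℝ)) ≤ #P ∧
      99 / 100 * (1 / 4 * (Fintype.card C : ℝ)) ≤ #Pᶜ ∧
      ∀ i, 99 / 100 * (3 / 4 * δ) ≤ #(S i ∩ P) := by
  have htail (Y : Finset (Fin 4)) (s : Finset C) {m : ℝ} (hm : δ / 4 ≤ m)
      (hms : m ≤ #s * (#Y / 4)) := (uniformColoring_card_hits_le_le (fun _ => Y) s (η := 1 / 100)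
    (by linarith) (by simpa using hms) (by norm_num) (by norm_num)).trans (exp_neg_chernoff_le hm)
  have hthree : (#({0}ᶜ : Finset (Fin 4)) : ℝ) = 3 := by simp [card_compl]
  have hin := htail {0}ᶜ univ (m := 3 / 4 * Fintype.card C) (by linarith)
    (by rw [hthree, card_univ]; linarith)
  have hout := htail {0} univ (m := 1 / 4 * Fintype.card C) (by linarith)
    (by rw [card_singleton, card_univ, Nat.cast_one]; linarith)
  have hsets := measureReal_iUnion_le_card_mul fun i => htail {0}ᶜ (S i) (m := 3 / 4 * δ)
    (by linarith) (by rw [hthree]; linarith [hS i])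
  obtain ⟨c, hc⟩ := exists_notMem_of_measureReal_lt_one
    ((measureReal_union_le _ _).trans_lt ((add_le_add (measureReal_union_le _ _) le_rfl).trans_lt
      ((add_le_add (add_le_add hin hout) hsets).trans_lt
        ((by ring : _ = _).trans_lt hsmall))))
  simp only [Set.mem_union, Set.mem_iUnion, Set.mem_ofPred_eq, not_or, not_exists, not_le] at hc
  obtain ⟨⟨hcin, hcout⟩, hcsets⟩ := hc
  refine ⟨hits (fun _ => {0}ᶜ) univ c, by linarith, ?_, fun i => ?_⟩
  · have : (hits (fun _ => {0}ᶜ) univ c)ᶜ = hits (fun _ => {0}) univ c := by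
      ext; simp [hits]
    rw [this]
    linarith
  · have : S i ∩ hits (fun _ => {0}ᶜ) univ c = hits (fun _ => {0}ᶜ) (S i) c := by
      ext; simp [hits]
    rw [this]
    linarith [hcsets i]

end Palette

section Recoloring

open Finset

theorem notMem_neighborFinset_of_cliqueFree {V : Type*} [Fintype V] {B : SimpleGraph V}
    [DecidableRel B.Adj] (hB : B.CliqueFree 3) {u v v' : V} (hu : u ∈ B.neighborFinset v)
    (hv' : v' ∈ B.neighborFinset u) : v' ∉ B.neighborFinset v := by
  rw [mem_neighborFinset] at *
  exact fun h => isIndepSet_neighborSet_of_triangleFree B hB v hu h hv'.ne hv'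

variable {V C P : Type*} [Fintype V] [DecidableEq V] [DecidableEq C] [DecidableEq P]
  {B : SimpleGraph V} [DecidableRel B.Adj]

theorem badNeighbors_congr {χ χ' : V → C} {v : V}
    (h : ∀ u ∈ B.neighborFinset v, ∀ v' ∈ B.neighborFinset u, χ v' = χ' v') :
    badNeighbors B χ v = badNeighbors B χ' v := by
  refine filter_congr fun u hu => not_congr (forall₂_congr fun v' hv' => ?_)
  have hv : v ∈ B.neighborFinset u := by
    rw [mem_neighborFinset] at hu ⊢
    exact hu.symm
  rw [h u hu v' hv', h u hu v hv]

/-- More than a quarter of the neighbours of `v` are bad for the colour of `v`. -/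
abbrev Crowded (B : SimpleGraph V) [DecidableRel B.Adj] (χ : V → C) (v : V) : Prop :=
  B.degree v < 4 * #(badNeighbors B χ v)

theorem badNeighbors_piecewise (hB : B.CliqueFree 3) (c c' : V → C) (v : V) :
    badNeighbors B ((B.neighborFinset v).piecewise c' c) v = badNeighbors B c v :=
  badNeighbors_congr fun _ hu _ hv' =>
    piecewise_eq_of_notMem _ _ _ (notMem_neighborFinset_of_cliqueFree hB hu hv')

/-- The colours of `Y` that would make `u` crowded on account of the vertices that are not
neighbours of `v`. -/
def crowdingColors (B : SimpleGraph V) [DecidableRel B.Adj] (v : V) (Y : Finset P) (c : V → P)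
    (u : V) : Finset P :=
  {y ∈ Y | B.degree u <
    4 * #{w ∈ B.neighborFinset u | ∃ u' ∈ B.neighborFinset w, u' ∉ B.neighborFinset v ∧ c u' = y}}

theorem not_crowded_piecewise {u v : V} {Y : Finset P} {c c' : V → P}
    (hu : u ∈ B.neighborFinset v) (hY : c' u ∈ Y) (hcrowd : c' u ∉ crowdingColors B v Y c u)
    (huniq : UniquelyColored (B.neighborFinset v) c' u) :
    ¬ Crowded B ((B.neighborFinset v).piecewise c' c) u := by
  have hsub : badNeighbors B ((B.neighborFinset v).piecewise c' c) u ⊆ {w ∈ B.neighborFinset u |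
      ∃ u' ∈ B.neighborFinset w, u' ∉ B.neighborFinset v ∧ c u' = c' u} := by
    intro w hw
    obtain ⟨hwu, u', hu'w, hcol, hne⟩ := mem_badNeighbors.1 hw
    rw [piecewise_eq_of_mem _ _ _ hu] at hcol
    have hu'v : u' ∉ B.neighborFinset v := fun h =>
      hne (huniq u' h (by rwa [piecewise_eq_of_mem _ _ _ h] at hcol))
    rw [piecewise_eq_of_notMem _ _ _ hu'v] at hcol
    exact mem_filter.2 ⟨hwu, u', hu'w, hu'v, hcol⟩
  have hfew := fun h => hcrowd (mem_filter.2 ⟨hY, h⟩)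
  have := card_le_card hsub
  lia

theorem card_crowdingColors_mul_degree_le (v : V) (Y : Finset P) (c : V → P) (u : V) :
    #(crowdingColors B v Y c u) * B.degree u ≤
      4 * ∑ u' ∈ hits (fun _ => Y) (B.neighborFinset v)ᶜ c, codegree B u u' := by
  set seen : P → Finset V := fun y =>
    {w ∈ B.neighborFinset u | ∃ u' ∈ B.neighborFinset w, u' ∉ B.neighborFinset v ∧ c u' = y}
  have hseen (y : P) : #(seen y) ≤ ∑ u' ∈ (B.neighborFinset v)ᶜ with c u' = y, codegree B u u' := by
    refine (card_le_card fun w hw => ?_).trans card_biUnion_le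
    obtain ⟨hwu, u', hu'w, hu'v, hcol⟩ := mem_filter.1 hw
    refine mem_biUnion.2 ⟨u', mem_filter.2 ⟨mem_compl.2 hu'v, hcol⟩, mem_inter.2 ⟨hwu, ?_⟩⟩
    rw [mem_neighborFinset] at hu'w ⊢
    exact hu'w.symm
  calc #(crowdingColors B v Y c u) * B.degree u
      ≤ ∑ y ∈ crowdingColors B v Y c u, 4 * #(seen y) :=
        card_nsmul_le_sum _ _ _ fun y hy => (mem_filter.1 hy).2.le
    _ ≤ ∑ y ∈ Y, 4 * #(seen y) := sum_le_sum_of_subset (filter_subset _ _)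
    _ ≤ 4 * ∑ y ∈ Y, ∑ u' ∈ (B.neighborFinset v)ᶜ with c u' = y, codegree B u u' := by
        rw [← mul_sum]
        exact Nat.mul_le_mul_left 4 (sum_le_sum fun y _ => hseen y)
    _ = _ := by
        simp only [sum_filter, hits]
        rw [sum_comm]
        simp only [sum_ite_eq]

end Recoloring

section Recolor

open Finset

variable {V C : Type*} [Fintype V] [DecidableEq V] [DecidableEq C]
  {B : SimpleGraph V} [DecidableRel B.Adj] {P : Finset C} {c₂ : V → C}

/-- The colouring `c`, replaced by the reserve colouring `c₂` at the vertices that are crowded. -/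
def recolor (B : SimpleGraph V) [DecidableRel B.Adj] (c₂ : V → C) (c : V → P) (v : V) : C :=
  if Crowded B c v then c₂ v else c v

/-- The neighbours of `v` that may be bad after recolouring, whichever other vertices are
recoloured. -/
def riskyNeighbors (B : SimpleGraph V) [DecidableRel B.Adj] (c₂ : V → C) (c : V → P) (v : V) :
    Finset V :=
  if Crowded B c v then badNeighbors B c₂ v else badNeighbors B c v

/-- The neighbours `u` of `v` such that `uv` is mapped to an edge of `𝒢` and each endpoint of `uv`
is the only neighbour of the other one with its colour. -/
def keptNeighbors (B : SimpleGraph V) [DecidableRel B.Adj] (𝒢 : SimpleGraph C) [DecidableRel 𝒢.Adj]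
    (χ : V → C) (v : V) : Finset V :=
  {u ∈ B.neighborFinset v | 𝒢.Adj (χ v) (χ u) ∧ UniquelyColored (B.neighborFinset u) χ v ∧
    UniquelyColored (B.neighborFinset v) χ u}

/-- The neighbours of `x` in `𝒢` that lie in the palette `P`. -/
def paletteNeighbors (𝒢 : SimpleGraph C) [DecidableRel 𝒢.Adj] (P : Finset C) (x : C) : Finset P :=
  {y | 𝒢.Adj x y}

theorem recolor_piecewise (hB : B.CliqueFree 3) (c₂ : V → C) (c c' : V → P) (v : V) :
    recolor B c₂ ((B.neighborFinset v).piecewise c' c) v = recolor B c₂ c v := by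
  simp only [recolor, Crowded, badNeighbors_piecewise hB,
    piecewise_eq_of_notMem _ _ _ (B.notMem_neighborFinset_self v)]

theorem riskyNeighbors_piecewise (hB : B.CliqueFree 3) (c₂ : V → C) (c c' : V → P) (v : V) :
    riskyNeighbors B c₂ ((B.neighborFinset v).piecewise c' c) v = riskyNeighbors B c₂ c v := by
  simp only [riskyNeighbors, Crowded, badNeighbors_piecewise hB]

theorem riskyNeighbors_subset (B : SimpleGraph V) [DecidableRel B.Adj] (c₂ : V → C) (c : V → P)
    (v : V) : riskyNeighbors B c₂ c v ⊆ B.neighborFinset v := by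
  unfold riskyNeighbors
  split_ifs <;> exact badNeighbors_subset B _ v

theorem four_mul_card_riskyNeighbors_le {v : V} (hc₂ : ¬ Crowded B c₂ v) (c : V → P) :
    4 * #(riskyNeighbors B c₂ c v) ≤ B.degree v := by
  unfold riskyNeighbors
  split_ifs with h
  exacts [not_lt.1 hc₂, not_lt.1 h]

theorem eq_of_recolor_eq_coe (hc₂ : ∀ v, c₂ v ∉ P) {c : V → P} {v : V} {y : P}
    (h : recolor B c₂ c v = y) : c v = y := by
  unfold recolor at h
  split_ifs at h
  · exact absurd (h ▸ y.2) (hc₂ v)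
  · exact Subtype.ext h

theorem badNeighbors_recolor_subset (hc₂ : ∀ v, c₂ v ∉ P) (c : V → P) (v : V) :
    badNeighbors B (recolor B c₂ c) v ⊆ riskyNeighbors B c₂ c v := by
  intro u hu
  obtain ⟨huv, v', hv'u, hcol, hne⟩ := mem_badNeighbors.1 hu
  by_cases hv : Crowded B c v
  · have hcol₂ : recolor B c₂ c v' = c₂ v := hcol.trans (if_pos hv)
    have hv' : Crowded B c v' := by
      by_contra h
      rw [recolor, if_neg h] at hcol₂
      exact hc₂ v (hcol₂ ▸ (c v').2)
    rw [recolor, if_pos hv'] at hcol₂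
    rw [riskyNeighbors, if_pos hv]
    exact mem_badNeighbors.2 ⟨huv, v', hv'u, hcol₂, hne⟩
  · rw [riskyNeighbors, if_neg hv]
    exact mem_badNeighbors.2
      ⟨huv, v', hv'u, eq_of_recolor_eq_coe hc₂ (hcol.trans (if_neg hv)), hne⟩

variable {𝒢 : SimpleGraph C} [DecidableRel 𝒢.Adj]

theorem goodVertices_subset_keptNeighbors (hB : B.CliqueFree 3) (hc₂ : ∀ v, c₂ v ∉ P) {v : V}
    {c c' : V → P} {Y : Finset P} (hY : Y = paletteNeighbors 𝒢 P (recolor B c₂ c v)) :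
    goodVertices Y (crowdingColors B v Y c) (B.neighborFinset v)
        (B.neighborFinset v \ riskyNeighbors B c₂ c v) c' ⊆
      keptNeighbors B 𝒢 (recolor B c₂ ((B.neighborFinset v).piecewise c' c)) v := by
  intro u hu
  obtain ⟨huU, huY, hucrowd, huuniq⟩ := mem_goodVertices.1 hu
  obtain ⟨huv, hurisky⟩ := mem_sdiff.1 huU
  set e := (B.neighborFinset v).piecewise c' c
  have he : ∀ u' ∈ B.neighborFinset v, e u' = c' u' := fun u' hu' =>
    piecewise_eq_of_mem _ _ _ hu'
  have hrecolor_u : recolor B c₂ e u = c' u := by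
    rw [recolor, if_neg (not_crowded_piecewise huv huY hucrowd huuniq), he u huv]
  have hrecolor_v : recolor B c₂ e v = recolor B c₂ c v := recolor_piecewise hB c₂ c c' v
  refine mem_filter.2 ⟨huv, ?_, ?_, fun u' hu' hcol => ?_⟩
  · rw [hY, paletteNeighbors, mem_filter] at huY
    rw [hrecolor_u, hrecolor_v]
    exact huY.2
  · by_contra hbad
    refine hurisky ?_
    rw [← riskyNeighbors_piecewise hB c₂ c c' v]
    exact badNeighbors_recolor_subset hc₂ e v (mem_filter.2 ⟨huv, hbad⟩)
  · have := eq_of_recolor_eq_coe hc₂ (hcol.trans hrecolor_u)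
    exact huuniq u' hu' (by rwa [he u' hu'] at this)

end Recolor

section CodegreeLoad

open MeasureTheory ProbabilityTheory Real Finset

variable {V P : Type*} [Fintype V] [DecidableEq V] [DecidableEq P]

/-- The total codegree with `u`, relative to the degree of `u`, of the vertices of `s` with colour
in `Y`. -/
noncomputable def codegreeLoad (B : SimpleGraph V) [DecidableRel B.Adj] (u : V) (s : Finset V)
    (Y : Finset P) (c : V → P) : ℝ :=
  ∑ u' ∈ hits (fun _ => Y) s c, (codegree B u u' / B.degree u : ℝ)

variable {B : SimpleGraph V} [DecidableRel B.Adj]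

theorem card_crowdingColors_le (v : V) (Y : Finset P) (c : V → P) (u : V) :
    (#(crowdingColors B v Y c u) : ℝ) ≤ 4 * codegreeLoad B u (B.neighborFinset v)ᶜ Y c := by
  rcases (B.degree u).eq_zero_or_pos with hu | hu
  · have hnone : crowdingColors B v Y c u = ∅ := by
      rw [← card_neighborFinset_eq_degree, card_eq_zero] at hu
      simp [crowdingColors, hu]
    simp [hnone, codegreeLoad, hu]
  · rw [codegreeLoad, ← sum_div, ← mul_div_assoc, le_div_iff₀ (Nat.cast_pos.2 hu)]
    exact_mod_cast card_crowdingColors_mul_degree_le v Y c u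

theorem codegreeLoad_piecewise (s : Finset V) (u : V) (Y : Finset P) (c c' : V → P) :
    codegreeLoad B u sᶜ Y (s.piecewise c' c) = codegreeLoad B u sᶜ Y c := by
  have : hits (fun _ => Y) sᶜ (s.piecewise c' c) = hits (fun _ => Y) sᶜ c :=
    filter_congr fun u' hu' => by rw [piecewise_eq_of_notMem _ _ _ (mem_compl.1 hu')]
  rw [codegreeLoad, this, codegreeLoad]

variable [Fintype P] [Nonempty P] [MeasurableSpace P] [DiscreteMeasurableSpace P]

theorem uniformColoring_codegreeLoad_ge_le {d : ℕ} (hd : ∀ w, B.degree w ≤ d) (u : V)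
    (s : Finset V) (Y : Finset P) {η : ℝ} (hη0 : 0 ≤ η) (hη1 : η ≤ 1) :
    (uniformColoring V P).real
        {c | (1 + η) * (d * (#Y / Fintype.card P)) ≤ codegreeLoad B u s Y c} ≤
      exp (-(η ^ 2 / 6 * (d * (#Y / Fintype.card P)))) := by
  refine uniformColoring_sum_hits_ge_le (w := fun u' => codegree B u u' / B.degree u)
    (fun u' => ⟨by positivity, div_le_one_of_le₀ ?_ (by positivity)⟩) (fun _ => Y) s ?_ hη0 hη1
  · exact_mod_cast card_le_card inter_subset_left
  · rw [← sum_mul, ← sum_div]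
    refine mul_le_mul_of_nonneg_right (div_le_of_le_mul₀ (by positivity) (by positivity) ?_)
      (by positivity)
    exact_mod_cast (sum_le_sum_of_subset (subset_univ s)).trans (sum_codegree_le hd u)

end CodegreeLoad

section KeptNeighbors

open MeasureTheory ProbabilityTheory Real Finset

variable {V C : Type*} [Fintype V] [DecidableEq V] [DecidableEq C]

/-- The data of the random recolouring: a triangle-free graph `B` with degrees between `d / 2` and
`d`, a palette `P` for the random colouring in which every vertex of `𝒢` has at least `D`
neighbours, and a reserve colouring `c₂` that avoids `P` and crowds no vertex. -/
structure IsRecoloringSetup (B : SimpleGraph V) [DecidableRel B.Adj] (𝒢 : SimpleGraph C)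
    [DecidableRel 𝒢.Adj] (P : Finset C) (c₂ : V → C) (d : ℕ) (D : ℝ) : Prop where
  cliqueFree : B.CliqueFree 3
  degree_le : ∀ v, B.degree v ≤ d
  le_two_mul_degree : ∀ v, d ≤ 2 * B.degree v
  reserve_notMem : ∀ v, c₂ v ∉ P
  reserve_not_crowded : ∀ v, ¬ Crowded B c₂ v
  le_card_palette : 23.76 * (d : ℝ) ≤ #P
  nonneg : 0 ≤ D
  le_card_paletteNeighbors : ∀ x, D ≤ #(paletteNeighbors 𝒢 P x)

variable {B : SimpleGraph V} [DecidableRel B.Adj] {𝒢 : SimpleGraph C} [DecidableRel 𝒢.Adj]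
  {P : Finset C} {c₂ : V → C} {d : ℕ} {D : ℝ}

theorem three_quarters_le_card_sdiff_riskyNeighbors {v : V} (hc₂ : ¬ Crowded B c₂ v) (c : V → P) :
    3 / 4 * (#(B.neighborFinset v) : ℝ) ≤ #(B.neighborFinset v \ riskyNeighbors B c₂ c v) := by
  have hsplit := card_sdiff_add_card_eq_card (riskyNeighbors_subset B c₂ c v)
  have hrisky := four_mul_card_riskyNeighbors_le hc₂ c
  rw [← card_neighborFinset_eq_degree] at hrisky
  have : 3 * #(B.neighborFinset v) ≤ 4 * #(B.neighborFinset v \ riskyNeighbors B c₂ c v) := by lia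
  have : 3 * (#(B.neighborFinset v) : ℝ) ≤
      4 * #(B.neighborFinset v \ riskyNeighbors B c₂ c v) := by exact_mod_cast this
  linarith

theorem card_crowdingColors_le_of_codegreeLoad_lt
    (hP : 23.76 * (d : ℝ) ≤ Fintype.card P) {u v : V} {Y : Finset P} {c : V → P}
    (hload : codegreeLoad B u (B.neighborFinset v)ᶜ Y c <
      (1 + 1 / 100) * (d * (#Y / Fintype.card P))) :
    (#(crowdingColors B v Y c u) : ℝ) ≤ 9 / 50 * #Y := by
  have hshare : 23.76 * (d * (#Y / Fintype.card P)) ≤ (#Y : ℝ) := by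
    rw [← mul_assoc, ← mul_div_assoc]
    refine div_le_of_le_mul₀ (by positivity) (by positivity) ?_
    rw [mul_comm (#Y : ℝ)]
    gcongr
  have hfew := card_crowdingColors_le (B := B) v Y c u
  linarith [(#Y).cast_nonneg (α := ℝ)]

variable [Nonempty P] [MeasurableSpace P] [DiscreteMeasurableSpace P]

theorem uniformColoring_card_keptNeighbors_piecewise_lt_le (hS : IsRecoloringSetup B 𝒢 P c₂ d D)
    {m ν : ℝ} (hm : m = d / 2 * (D / Fintype.card P)) (hν1 : ν ≤ 3 / 25 * m)
    (hν2 : ν ≤ d / 2 * (m / Fintype.card P)) {v : V} {c : V → P}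
    (hload : ∀ u ∈ B.neighborFinset v, ∀ x,
      codegreeLoad B u (B.neighborFinset v)ᶜ (paletteNeighbors 𝒢 P x) c <
        (1 + 1 / 100) * (d * (#(paletteNeighbors 𝒢 P x) / Fintype.card P))) :
    (uniformColoring V P).real {c' | (#(keptNeighbors B 𝒢
        (recolor B c₂ ((B.neighborFinset v).piecewise c' c)) v) : ℝ) < 103 / 200 * m} ≤
      4 * exp (-(ν / 60000)) := by
  set Y := paletteNeighbors 𝒢 P (recolor B c₂ c v)
  set N := B.neighborFinset v
  have hP : 23.76 * (d : ℝ) ≤ Fintype.card P := by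
    rw [Fintype.card_coe]
    exact hS.le_card_palette
  have hNd : (#N : ℝ) ≤ d := by exact_mod_cast hS.degree_le v
  have hdN : (d : ℝ) / 2 ≤ #N := by
    have : (d : ℝ) ≤ 2 * #N := by exact_mod_cast hS.le_two_mul_degree v
    linarith
  have hmean : m ≤ #N * (#Y / Fintype.card P) := by
    rw [hm]
    have := hS.nonneg
    gcongr
    exact hS.le_card_paletteNeighbors _
  have hν2' : ν ≤ #N * (#N * (#Y / Fintype.card P) / Fintype.card P) := by
    have : 0 ≤ m := hm ▸ mul_nonneg (by positivity) (div_nonneg hS.nonneg (by positivity))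
    exact hν2.trans (by gcongr)
  have htail := uniformColoring_card_goodVertices_lt_le Y (crowdingColors B v Y c) (ν := ν)
    sdiff_subset (three_quarters_le_card_sdiff_riskyNeighbors (hS.reserve_not_crowded v) c)
    (by linarith) (fun u hu =>
      card_crowdingColors_le_of_codegreeLoad_lt hP (hload u (mem_sdiff.1 hu).1 _))
    rfl (by linarith) hν2'
  refine (measureReal_mono fun c' hc' => ?_).trans htail
  have hsub := card_le_card (goodVertices_subset_keptNeighbors hS.cliqueFree hS.reserve_notMem
    (c := c) (c' := c') (v := v) (Y := Y) rfl)
  rw [Set.mem_ofPred_eq] at hc' ⊢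
  linarith [(Nat.cast_le (α := ℝ)).2 hsub]

theorem uniformColoring_iUnion_codegreeLoad_ge_le [Fintype C]
    (hS : IsRecoloringSetup B 𝒢 P c₂ d D) {ν : ℝ} (hν : ν ≤ d * (D / Fintype.card P)) (v : V) :
    (uniformColoring V P).real (⋃ i : B.neighborFinset v × C,
        {c | (1 + 1 / 100) * (d * (#(paletteNeighbors 𝒢 P i.2) / Fintype.card P)) ≤
          codegreeLoad B i.1 (B.neighborFinset v)ᶜ (paletteNeighbors 𝒢 P i.2) c}) ≤
      d * Fintype.card C * exp (-(ν / 60000)) := by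
  refine (measureReal_iUnion_le_card_mul (p := exp (-(ν / 60000))) fun i => ?_).trans ?_
  · refine (uniformColoring_codegreeLoad_ge_le hS.degree_le i.1 _ _ (by norm_num)
      (by norm_num)).trans (exp_neg_chernoff_le (hν.trans ?_))
    gcongr
    exact hS.le_card_paletteNeighbors _
  · rw [Fintype.card_prod, Fintype.card_coe, card_neighborFinset_eq_degree, Nat.cast_mul]
    gcongr
    exact hS.degree_le v

theorem uniformColoring_card_keptNeighbors_lt_le [Fintype C]
    (hS : IsRecoloringSetup B 𝒢 P c₂ d D)
    {m ν : ℝ} (hm : m = d / 2 * (D / Fintype.card P)) (hν1 : ν ≤ 3 / 25 * m)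
    (hν2 : ν ≤ d / 2 * (m / Fintype.card P)) (v : V) :
    (uniformColoring V P).real
        {c | (#(keptNeighbors B 𝒢 (recolor B c₂ c) v) : ℝ) < 103 / 200 * m} ≤
      (d * Fintype.card C + 4) * exp (-(ν / 60000)) := by
  set E : Set (V → P) := {c | (#(keptNeighbors B 𝒢 (recolor B c₂ c) v) : ℝ) < 103 / 200 * m}
  set F : Set (V → P) := ⋃ i : B.neighborFinset v × C,
    {c | (1 + 1 / 100) * (d * (#(paletteNeighbors 𝒢 P i.2) / Fintype.card P)) ≤
      codegreeLoad B i.1 (B.neighborFinset v)ᶜ (paletteNeighbors 𝒢 P i.2) c}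
  have hm0 : 0 ≤ m := hm ▸ mul_nonneg (by positivity) (div_nonneg hS.nonneg (by positivity))
  have hF : (uniformColoring V P).real F ≤ d * Fintype.card C * exp (-(ν / 60000)) :=
    uniformColoring_iUnion_codegreeLoad_ge_le hS (by linarith) v
  have hEF : (uniformColoring V P).real (E \ F) ≤ 4 * exp (-(ν / 60000)) := by
    refine measureReal_le_of_forall_piecewise _ (B.neighborFinset v) .of_discrete fun c => ?_
    by_cases hc : c ∈ F
    · have hempty : {c' | (B.neighborFinset v).piecewise c' c ∈ E \ F} = ∅ := by
        refine Set.eq_empty_of_forall_notMem fun c' hc' => hc'.2 ?_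
        simpa only [F, Set.mem_iUnion, Set.mem_ofPred_eq, codegreeLoad_piecewise] using hc
      rw [hempty, measureReal_empty]
      positivity
    · simp only [F, Set.mem_iUnion, Set.mem_ofPred_eq, not_exists, not_le] at hc
      exact (measureReal_mono fun c' hc' => hc'.1).trans
        (uniformColoring_card_keptNeighbors_piecewise_lt_le hS hm hν1 hν2
          fun u hu x => hc (⟨u, hu⟩, x))
  calc (uniformColoring V P).real E ≤ (uniformColoring V P).real (F ∪ (E \ F)) :=
        measureReal_mono (by rw [Set.union_sdiff_self]; exact Set.subset_union_right)
    _ ≤ _ := measureReal_union_le _ _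
    _ ≤ _ := by linarith

end KeptNeighbors

section Dependence

open MeasureTheory Finset

theorem exists_edist_le_one_of_edist_le_succ {V : Type*} {B : SimpleGraph V} {u w : V} {n : ℕ}
    (h : B.edist u w ≤ (n + 1 : ℕ)) : ∃ v, B.edist u v ≤ 1 ∧ B.edist v w ≤ n := by
  obtain ⟨walk, hwalk⟩ := exists_walk_of_edist_ne_top (h.trans_lt (ENat.natCast_lt_top _)).ne
  rw [← hwalk, Nat.cast_le] at h
  cases walk with
  | nil => exact ⟨u, by simp, by simp⟩
  | cons hadj tail =>
    refine ⟨_, (edist_eq_one_iff_adj.2 hadj).le, tail.edist_le.trans ?_⟩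
    rw [Walk.length_cons] at h
    exact_mod_cast Nat.le_of_succ_le_succ h

theorem edist_le_two {V : Type*} [Fintype V] {B : SimpleGraph V} [DecidableRel B.Adj] {u v w : V}
    (hu : u ∈ B.neighborFinset v) (hw : w ∈ B.neighborFinset u) : B.edist v w ≤ 2 := by
  rw [mem_neighborFinset] at hu hw
  exact (Walk.cons hu (.cons hw .nil)).edist_le

variable {V : Type*} [Fintype V] {B : SimpleGraph V} [DecidableRel B.Adj]

theorem ncard_edist_le {d : ℕ} (hd : ∀ v, B.degree v ≤ d) (n : ℕ) (v : V) :
    {w | B.edist v w ≤ n}.ncard ≤ (d + 1) ^ n := by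
  classical
  induction n generalizing v with
  | zero => simp [Set.ncard_singleton]
  | succ n ih =>
    have hcover : {w | B.edist v w ≤ (n + 1 : ℕ)} ⊆
        ⋃ u ∈ insert v (B.neighborFinset v), {w | B.edist u w ≤ n} := by
      intro w hw
      obtain ⟨u, hvu, huw⟩ := exists_edist_le_one_of_edist_le_succ hw
      refine Set.mem_biUnion ?_ huw
      rw [edist_le_one_iff_adj_or_eq] at hvu
      simpa [or_comm, eq_comm] using hvu
    calc {w | B.edist v w ≤ (n + 1 : ℕ)}.ncard
        ≤ ∑ u ∈ insert v (B.neighborFinset v), {w | B.edist u w ≤ n}.ncard :=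
          (Set.ncard_le_ncard hcover).trans (set_ncard_biUnion_le _ _)
      _ ≤ #(insert v (B.neighborFinset v)) * (d + 1) ^ n :=
          sum_le_card_nsmul _ _ _ fun u _ => ih u
      _ ≤ (d + 1) * (d + 1) ^ n :=
          Nat.mul_le_mul_right _ ((card_insert_le _ _).trans (Nat.succ_le_succ (hd v)))
      _ = (d + 1) ^ (n + 1) := (pow_succ' _ _).symm

variable [DecidableEq V]

theorem keptNeighbors_congr {C : Type*} [DecidableEq C] {𝒢 : SimpleGraph C} [DecidableRel 𝒢.Adj]
    {χ χ' : V → C} {v : V} (h : ∀ w, B.edist v w ≤ 2 → χ w = χ' w) :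
    keptNeighbors B 𝒢 χ v = keptNeighbors B 𝒢 χ' v := by
  have hself : χ v = χ' v := h v (by simp)
  have hnbr : ∀ u ∈ B.neighborFinset v, χ u = χ' u := fun u hu => h u <| by
    rw [mem_neighborFinset] at hu
    exact (edist_eq_one_iff_adj.2 hu).trans_le one_le_two
  refine filter_congr fun u hu => ?_
  rw [hself, hnbr u hu]
  refine and_congr_right' (and_congr (forall₂_congr fun w hw => ?_) (forall₂_congr fun w hw => ?_))
  · rw [h w (edist_le_two hu hw), hself]
  · rw [hnbr w hw, hnbr u hu]

variable {C : Type*} [DecidableEq C] {P : Finset C} {𝒢 : SimpleGraph C} [DecidableRel 𝒢.Adj]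
  {c₂ : V → C}

theorem recolor_congr {c c' : V → P} {v : V} (h : ∀ w, B.edist v w ≤ 2 → c w = c' w) :
    recolor B c₂ c v = recolor B c₂ c' v := by
  unfold recolor Crowded
  rw [badNeighbors_congr fun u hu w hw => h w (edist_le_two hu hw), h v (by simp)]

theorem keptNeighbors_recolor_congr {c c' : V → P} {v : V}
    (h : ∀ w, B.edist v w ≤ 4 → c w = c' w) :
    keptNeighbors B 𝒢 (recolor B c₂ c) v = keptNeighbors B 𝒢 (recolor B c₂ c') v :=
  keptNeighbors_congr fun _ hu => recolor_congr fun w hw =>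
    h w <| SimpleGraph.edist_triangle.trans <| (add_le_add hu hw).trans_eq (by norm_num)

theorem exists_forall_le_card_keptNeighbors_recolor [Nonempty P] [MeasurableSpace P]
    [DiscreteMeasurableSpace P] {d : ℕ} (hd : ∀ v, B.degree v ≤ d) {m p : ℝ}
    (hp : 4 * p * ((d + 1) ^ 8 : ℕ) ≤ 1)
    (hfail : ∀ v, (uniformColoring V P).real
      {c | (#(keptNeighbors B 𝒢 (recolor B c₂ c) v) : ℝ) < m} ≤ p) :
    ∃ c : V → P, ∀ v, m ≤ #(keptNeighbors B 𝒢 (recolor B c₂ c) v) := by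
  classical
  have hdep (v : V) : DependsOn
      (· ∈ {c : V → P | (#(keptNeighbors B 𝒢 (recolor B c₂ c) v) : ℝ) < m})
      {w | B.edist v w ≤ 4} := fun c c' h => by
    simp only [Set.mem_ofPred_eq, keptNeighbors_recolor_congr h]
  have hdisjoint (v v' : V) (hv' : v' ∉ {w | B.edist v w ≤ (8 : ℕ)}.toFinset) :
      Disjoint {w | B.edist v w ≤ 4} {w | B.edist v' w ≤ 4} := by
    rw [Set.mem_toFinset] at hv'
    refine Set.disjoint_left.2 fun w hw hw' => hv' ?_
    rw [Set.mem_ofPred_eq, edist_comm] at hw'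
    exact SimpleGraph.edist_triangle.trans <| (add_le_add hw hw').trans_eq (by norm_num)
  have hp2 : 2 * p < 1 := by
    have : (1 : ℝ) ≤ ((d + 1) ^ 8 : ℕ) := by exact_mod_cast Nat.one_le_pow _ _ d.succ_pos
    nlinarith
  obtain ⟨c, hc⟩ := exists_forall_notMem_of_dependsOn _ (fun v => .of_discrete) hdep hdisjoint hp2
    (fun v => (Set.ncard_eq_toFinset_card' _).symm.trans_le (ncard_edist_le hd 8 v)) hp hfail
  exact ⟨c, fun v => not_lt.1 (hc v)⟩

end Dependence

section Setup

open Real Finset Filter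

theorem eventually_const_mul_pow_mul_exp_le {ε b : ℝ} (hε : 0 < ε) (hb : 0 < b) (k : ℕ) (A : ℝ) :
    ∀ᶠ d : ℕ in atTop, ∀ δ : ℝ, (d : ℝ) ^ ε < δ → A * (d ^ k * exp (-(b * δ))) ≤ 1 := by
  have hlim := ((tendsto_rpow_mul_exp_neg_mul_atTop_nhds_zero (k / ε) b hb).comp
    ((tendsto_rpow_atTop hε).comp tendsto_natCast_atTop_atTop)).const_mul |A|
  rw [mul_zero] at hlim
  filter_upwards [hlim.eventually (gt_mem_nhds one_pos)] with d hd δ hδ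
  have hpow : ((d : ℝ) ^ ε) ^ (k / ε) = d ^ k := by
    rw [← rpow_mul d.cast_nonneg, mul_div_cancel₀ _ hε.ne', rpow_natCast]
  calc A * (d ^ k * exp (-(b * δ))) ≤ |A| * (d ^ k * exp (-b * (d : ℝ) ^ ε)) := by
        rw [neg_mul]
        gcongr
        exact le_abs_self A
    _ ≤ 1 := by simpa only [Function.comp_apply, hpow] using hd.le

theorem eventually_failure_probability_le {ε b α : ℝ} (hε : 0 < ε) (hb : 0 < b) (hα : 0 ≤ α) :
    ∀ᶠ d : ℕ in atTop, ∀ δ : ℝ, (d : ℝ) ^ ε < δ →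
      4 * ((d * (α * d) + 4) * exp (-(b * δ))) * ((d + 1) ^ 8 : ℕ) ≤ 1 := by
  filter_upwards [eventually_const_mul_pow_mul_exp_le hε hb 10 (4 * (α + 4) * 2 ^ 8),
    eventually_ge_atTop 1] with d hd hd1 δ hδ
  have hd1' : (1 : ℝ) ≤ d := by exact_mod_cast hd1
  have hlinear : d * (α * d) + 4 ≤ (α + 4) * (d : ℝ) ^ 2 := by nlinarith
  have hpower : (((d + 1) ^ 8 : ℕ) : ℝ) ≤ (2 * d) ^ 8 := by
    push_cast
    gcongr
    linarith
  calc _ ≤ 4 * ((α + 4) * (d : ℝ) ^ 2 * exp (-(b * δ))) * (2 * d) ^ 8 := by gcongr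
    _ = 4 * (α + 4) * 2 ^ 8 * (d ^ 10 * exp (-(b * δ))) := by ring
    _ ≤ 1 := hd δ hδ

theorem card_paletteNeighbors {C : Type*} [Fintype C] [DecidableEq C] (𝒢 : SimpleGraph C)
    [DecidableRel 𝒢.Adj] (P : Finset C) (x : C) :
    #(paletteNeighbors 𝒢 P x) = #(𝒢.neighborFinset x ∩ P) := by
  rw [← card_map (Function.Embedding.subtype (· ∈ P))]
  congr 1
  ext y
  simp [paletteNeighbors, and_comm]

theorem badNeighbors_comp {V Q C : Type*} [Fintype V] [DecidableEq V] [DecidableEq Q]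
    [DecidableEq C] {B : SimpleGraph V} [DecidableRel B.Adj] {f : Q → C} (hf : f.Injective)
    (c : V → Q) (v : V) :
    badNeighbors B (f ∘ c) v = badNeighbors B c v := by
  ext u
  simp only [mem_badNeighbors, Function.comp_apply, hf.eq_iff]

theorem expected_kept_bounds {α δ d m M : ℝ} (hα : 32 ≤ α) (hδ : 0 ≤ δ) (hd : 0 < d) (hM0 : 0 < M)
    (hM : M ≤ 301 / 400 * (α * d)) (hm : m = d / 2 * (99 / 100 * (3 / 4 * δ) / M)) :
    δ / (4 * α) ≤ 103 / 200 * m ∧ δ / (4 * α ^ 2) ≤ 3 / 25 * m ∧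
      δ / (4 * α ^ 2) ≤ d / 2 * (m / M) := by
  have hα0 : 0 < α := by linarith
  have hα1 : α⁻¹ ≤ 1 / 32 := by rw [inv_le_comm₀ hα0 (by norm_num)]; simpa using hα
  have hratio : 33 / 25 * α⁻¹ ≤ d / M := by
    rw [← div_eq_mul_inv, div_le_div_iff₀ hα0 hM0]
    linarith [mul_pos hα0 hd]
  have hm' : m = 297 / 800 * δ * (d / M) := by rw [hm]; ring
  have hmean : 49 / 100 * (δ * α⁻¹) ≤ m := by
    have := mul_le_mul_of_nonneg_left hratio (by positivity : 0 ≤ 297 / 800 * δ)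
    have : 0 ≤ δ * α⁻¹ := by positivity
    linarith
  have hinv : δ / (4 * α) = 1 / 4 * (δ * α⁻¹) := by field
  have hinv2 : δ / (4 * α ^ 2) = 1 / 4 * (δ * α⁻¹) * α⁻¹ := by field
  have hδα : 0 ≤ δ * α⁻¹ := by positivity
  refine ⟨by linarith, by nlinarith, ?_⟩
  calc δ / (4 * α ^ 2) ≤ 1 / 2 * (33 / 25 * α⁻¹) * (49 / 100 * (δ * α⁻¹)) := by
        rw [hinv2]
        nlinarith [mul_nonneg hδα (inv_nonneg.2 hα0.le)]
    _ ≤ 1 / 2 * (d / M) * m := by gcongr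
    _ = d / 2 * (m / M) := by ring

variable {V C : Type*} [Fintype V] [DecidableEq V] [Fintype C] [DecidableEq C]
  {B : SimpleGraph V} [DecidableRel B.Adj] {𝒢 : SimpleGraph C} [DecidableRel 𝒢.Adj]

theorem exists_isRecoloringSetup (hB : B.CliqueFree 3) {d : ℕ} (hd0 : 0 < d)
    (hd : ∀ v, B.degree v ≤ d) (hd2 : ∀ v, d ≤ 2 * B.degree v)
    (hC : 32 * (d : ℝ) ≤ Fintype.card C) {δ : ℝ} (hδ0 : 0 ≤ δ) (hδ : ∀ x, δ ≤ 𝒢.degree x)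
    (hsmall : (Fintype.card C + 2) * exp (-(δ / 4 / 60000)) < 1) :
    ∃ (P : Finset C) (c₂ : V → C), IsRecoloringSetup B 𝒢 P c₂ d (99 / 100 * (3 / 4 * δ)) ∧
      99 / 100 * (1 / 4 * (Fintype.card C : ℝ)) ≤ #Pᶜ := by
  have hd0' : (0 : ℝ) < d := Nat.cast_pos.2 hd0
  have : Nonempty C := Fintype.card_pos_iff.1 (Nat.cast_pos (α := ℝ).1 (by linarith))
  have hδC : δ ≤ Fintype.card C :=
    (hδ (Classical.arbitrary C)).trans (Nat.cast_le.2 (card_le_univ _))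
  obtain ⟨P, hP, hPc, hDP⟩ := exists_finset_three_quarters (fun x => 𝒢.neighborFinset x) hδ0 hδC
    (by simpa using hδ) hsmall
  have hPc4 : 4 * d ≤ #Pᶜ := by
    have : 4 * (d : ℝ) ≤ #Pᶜ := by linarith
    exact_mod_cast this
  have : Nonempty (Pᶜ : Finset C) := (card_pos.1 (by lia)).to_subtype
  obtain ⟨c, hc⟩ := exists_coloring_mul_card_badNeighbors_le B (Pᶜ : Finset C) hd
    (by simpa only [Fintype.card_coe] using hPc4)
  refine ⟨P, Subtype.val ∘ c, ?_, hPc⟩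
  exact {
    cliqueFree := hB
    degree_le := hd
    le_two_mul_degree := hd2
    reserve_notMem := fun v => mem_compl.1 (c v).2
    reserve_not_crowded := fun v => by
      rw [Crowded, badNeighbors_comp Subtype.val_injective]
      exact not_lt.2 (hc v)
    le_card_palette := by linarith
    nonneg := by positivity
    le_card_paletteNeighbors := fun x => by
      rw [card_paletteNeighbors]
      exact hDP x }

theorem exists_forall_le_card_keptNeighbors (hB : B.CliqueFree 3) {d : ℕ} (hd0 : 0 < d)
    (hd : ∀ v, B.degree v ≤ d) (hd2 : ∀ v, d ≤ 2 * B.degree v) {α δ : ℝ} (hα : 32 ≤ α)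
    (hC : (Fintype.card C : ℝ) = α * d) (hδ0 : 0 ≤ δ) (hδ : ∀ x, δ ≤ 𝒢.degree x)
    (hsmall : 4 * ((d * Fintype.card C + 4) * exp (-(δ / (4 * α ^ 2) / 60000))) *
      ((d + 1) ^ 8 : ℕ) ≤ 1) :
    ∃ χ : V → C, ∀ v, δ / (4 * α) ≤ #(keptNeighbors B 𝒢 χ v) := by
  have hd1 : (1 : ℝ) ≤ d := by exact_mod_cast hd0
  have hpalette : (Fintype.card C + 2) * exp (-(δ / 4 / 60000)) < 1 := by
    have hle : (Fintype.card C + 2) * exp (-(δ / 4 / 60000)) ≤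
        (d * Fintype.card C + 4) * exp (-(δ / (4 * α ^ 2) / 60000)) := by
      gcongr
      · exact le_mul_of_one_le_left (by positivity) hd1
      · norm_num
      · nlinarith
    have hpow : (1 : ℝ) ≤ ((d + 1) ^ 8 : ℕ) := by exact_mod_cast Nat.one_le_pow _ _ d.succ_pos
    have hpos : 0 < (d * Fintype.card C + 4) * exp (-(δ / (4 * α ^ 2) / 60000)) := by positivity
    nlinarith [hpos]
  obtain ⟨P, c₂, hS, hPc⟩ := exists_isRecoloringSetup hB hd0 hd hd2 (by rw [hC]; gcongr) hδ0 hδ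
    hpalette
  have hP0 : (0 : ℝ) < #P := by linarith [hS.le_card_palette]
  have : Nonempty P := (card_pos.1 (Nat.cast_pos.1 hP0)).to_subtype
  let _ : MeasurableSpace P := ⊤
  have : DiscreteMeasurableSpace P := ⟨fun _ => trivial⟩
  have hcompl : (#P : ℝ) + #Pᶜ = α * d := by
    rw [← hC]
    exact_mod_cast card_add_card_compl P
  obtain ⟨hkept, hν1, hν2⟩ := expected_kept_bounds (d := d) (M := Fintype.card P) hα hδ0
    (by linarith) (by rwa [Fintype.card_coe]) (by rw [Fintype.card_coe]; linarith) rfl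
  obtain ⟨c, hc⟩ := exists_forall_le_card_keptNeighbors_recolor hd hsmall
    (uniformColoring_card_keptNeighbors_lt_le hS rfl hν1 hν2)
  exact ⟨recolor B c₂ c, fun v => hkept.trans (hc v)⟩

end Setup

section Conclusion

open Finset

theorem LocallyInjective.comp {α β γ : Type*} {F : SimpleGraph α} {H : SimpleGraph β}
    {G : SimpleGraph γ} {φ : H →g G} (hφ : LocallyInjective φ) {f : F →g H}
    (hf : LocallyInjective f) : LocallyInjective (φ.comp f) :=
  fun v => (hφ (f v)).comp (hf v) fun _ hw => f.map_adj hw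

theorem famFree_of_locallyInjective {β γ : Type*} {H : SimpleGraph β} {G : SimpleGraph γ}
    {φ : H →g G} (hφ : LocallyInjective φ) {𝓕 : GraphFamily}
    (hno : ∀ F ∈ 𝓕, NoLocInjHom F.2 G) : FamFree H 𝓕 := by
  rintro F hF ⟨f, hf⟩
  exact hno F hF ⟨φ.comp f, hφ.comp fun _ => hf.injOn⟩

variable {V C : Type*} [Fintype V] [DecidableEq V] [DecidableEq C]

/-- The edges of `B` that `χ` maps to edges of `𝒢` and whose endpoints are uniquely coloured among
each other's neighbours; `χ` is a locally injective homomorphism from this graph to `𝒢`. -/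
def keptSubgraph (B : SimpleGraph V) [DecidableRel B.Adj] (𝒢 : SimpleGraph C) [DecidableRel 𝒢.Adj]
    (χ : V → C) : SimpleGraph V where
  Adj v u := u ∈ keptNeighbors B 𝒢 χ v
  symm := ⟨fun v u h => by
    simp only [keptNeighbors, mem_filter, mem_neighborFinset] at h ⊢
    exact ⟨h.1.symm, h.2.1.symm, h.2.2.2, h.2.2.1⟩⟩
  loopless := ⟨fun v h => B.notMem_neighborFinset_self v (mem_filter.1 h).1⟩

variable (B : SimpleGraph V) [DecidableRel B.Adj] (𝒢 : SimpleGraph C) [DecidableRel 𝒢.Adj]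
  (χ : V → C)

theorem keptSubgraph_le : keptSubgraph B 𝒢 χ ≤ B :=
  fun v u h => (B.mem_neighborFinset v u).1 (mem_filter.1 h).1

theorem deg_keptSubgraph (v : V) : deg (keptSubgraph B 𝒢 χ) v = #(keptNeighbors B 𝒢 χ v) :=
  Set.ncard_coe_finset _

theorem exists_locallyInjective_hom_keptSubgraph :
    ∃ φ : keptSubgraph B 𝒢 χ →g 𝒢, LocallyInjective φ :=
  ⟨⟨χ, fun h => (mem_filter.1 h).2.1⟩, fun _ _ hu _ hu' hcol =>
    (mem_filter.1 hu').2.2.2 _ (mem_filter.1 hu).1 hcol⟩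

end Conclusion

theorem minDeg_le_deg {C : Type*} [Fintype C] (𝒢 : SimpleGraph C) (x : C) :
    minDeg 𝒢 ≤ deg 𝒢 x :=
  ciInf_le (OrderBot.bddBelow _) x

theorem statement1_general {ε α : ℝ} (hε : 0 < ε) (hα : 32 ≤ α) :
    ∃ d₀ : ℕ, ∀ d ≥ d₀, ∀ (V : Type*) [Fintype V] (G : SimpleGraph V), RegularDeg G d →
      ∀ (C : Type*) [Fintype C] (𝒢 : SimpleGraph C), (Fintype.card C : ℝ) = α * d →
        (d : ℝ) ^ ε < minDeg 𝒢 →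
        ∃ H ≤ G, (∃ φ : H →g 𝒢, LocallyInjective φ) ∧
          ∀ v, (minDeg 𝒢 : ℝ) / (4 * α) ≤ deg H v := by
  have hα0 : 0 < α := by linarith
  obtain ⟨d₀, hd₀⟩ := Filter.eventually_atTop.1 ((eventually_failure_probability_le hε
    (b := 1 / (240000 * α ^ 2)) (by positivity) hα0.le).and (Filter.eventually_gt_atTop 0))
  refine ⟨d₀, fun d hd V _ G hG C _ 𝒢 hC hδ => ?_⟩
  classical
  obtain ⟨hsmall, hd0⟩ := hd₀ d hd
  obtain ⟨B, hBG, hB, hdeg⟩ := exists_colorable_two_le_deg_le_two_mul_deg G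
  have hd_le (v : V) : B.degree v ≤ d := by
    rw [← hG v, deg_eq_card_neighborFinset]
    exact degree_le_of_le hBG
  have hle_d (v : V) : d ≤ 2 * B.degree v := by
    rw [← hG v, ← card_neighborFinset_eq_degree, ← deg_eq_card_neighborFinset]
    exact hdeg v
  have hδ_le (x : C) : (minDeg 𝒢 : ℝ) ≤ 𝒢.degree x := by
    rw [← card_neighborFinset_eq_degree, ← deg_eq_card_neighborFinset]
    exact_mod_cast minDeg_le_deg 𝒢 x
  obtain ⟨χ, hχ⟩ := exists_forall_le_card_keptNeighbors (hB.cliqueFree (by norm_num)) hd0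
    hd_le hle_d hα hC (Nat.cast_nonneg _) hδ_le (by
      rw [hC]
      convert hsmall _ hδ using 5
      field)
  refine ⟨keptSubgraph B 𝒢 χ, (keptSubgraph_le B 𝒢 χ).trans hBG,
    exists_locallyInjective_hom_keptSubgraph B 𝒢 χ, fun v => ?_⟩
  rw [deg_keptSubgraph]
  exact hχ v

theorem statement1 (𝓕 : GraphFamily)
    (hbip : ∀ F ∈ 𝓕, F.2.chromaticNumber = 2)
    (hforest : ∀ F ∈ 𝓕, ¬ F.2.IsAcyclic)
    (ε : ℝ) (hε : 0 < ε) (β : ℕ) (hβ : 1 ≤ β) (α : ℕ) (hα : 32 * β ≤ α) :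
    ∃ (c : ℝ) (d₀ : ℕ), 0 < c ∧
      ∀ d : ℕ, d₀ ≤ d →
        ∀ (V : Type) [Fintype V] (G : SimpleGraph V), RegularDeg G d →
          ∀ 𝒢 : SimpleGraph (Fin (α * d)),
            maxDeg 𝒢 ≤ β * minDeg 𝒢 →
            (d : ℝ) ^ ε < (minDeg 𝒢 : ℝ) →
            (∀ F ∈ 𝓕, NoLocInjHom F.2 𝒢) →
            ∃ H : SimpleGraph V, H ≤ G ∧ FamFree H 𝓕 ∧
              (∀ v : V, c * (minDeg 𝒢 : ℝ) ≤ (deg H v : ℝ)) ∧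
              (∀ v : V, (minDeg 𝒢 : ℝ) / (4 * (α : ℝ)) ≤ (deg H v : ℝ)) := by
  have hα32 : (32 : ℝ) ≤ α := by exact_mod_cast (by lia : 32 ≤ α)
  obtain ⟨d₀, hd₀⟩ := statement1_general hε hα32
  refine ⟨1 / (4 * α), d₀, by positivity, fun d hd V _ G hG 𝒢 _ hδ hno => ?_⟩
  obtain ⟨H, hHG, ⟨φ, hφ⟩, hdeg⟩ := hd₀ d hd V G hG _ 𝒢 (by simp) hδ
  exact ⟨H, hHG, famFree_of_locallyInjective hφ hno,
    fun v => (one_div_mul_eq_div _ _).trans_le (hdeg v), hdeg⟩
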